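/- arXiv:1710.10052 — 6 statements merged into one kernel-verified Lean document; each statement's English description precedes it below -/
import Mathlib

section
/- For every θ ∈ (0,π) and φ ∈ ℝ, the coordinate area element of the parametrised surface x satisfies ‖∂_θ x(θ,φ) × ∂_φ x(θ,φ)‖ = |J(θ,φ)| · sinθ, where × is the cross product in ℝ³. In particular if J > 0 then the area element of the surface is dA = J sinθ dθ dφ. -/
noncomputable section

/-- The unit radial vector `ℓ(θ,φ) = (sinθ cosφ, sinθ sinφ, cosθ)` in `ℝ³`. -/
def sphL (θ φ : ℝ) : Fin 3 → ℝ :=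
  ![Real.sin θ * Real.cos φ, Real.sin θ * Real.sin φ, Real.cos θ]

/-- The complex vector `m(θ,φ) = (1/√2)(cosθcosφ − i sinφ, cosθsinφ + i cosφ, −sinθ)` in `ℂ³`. -/
def sphM (θ φ : ℝ) : Fin 3 → ℂ :=
  ![(Real.sqrt 2 : ℂ)⁻¹ *
      (Complex.ofReal (Real.cos θ * Real.cos φ) - Complex.I * Complex.ofReal (Real.sin φ)),
    (Real.sqrt 2 : ℂ)⁻¹ *
      (Complex.ofReal (Real.cos θ * Real.sin φ) + Complex.I * Complex.ofReal (Real.cos φ)),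
    (Real.sqrt 2 : ℂ)⁻¹ * (-Complex.ofReal (Real.sin θ))]

/-- The Newman–Penrose operator `ð` acting on a function `η(θ,φ)` of spin weight `s`:
`ðη = (1/√2)(sinθ)^s (∂_θ + (i/sinθ)∂_φ)((sinθ)^{-s} η)`. -/
def eth (s : ℤ) (η : ℝ → ℝ → ℂ) (θ φ : ℝ) : ℂ :=
  (Real.sqrt 2 : ℂ)⁻¹ * (Real.sin θ : ℂ) ^ s *
    (deriv (fun t => (Real.sin t : ℂ) ^ (-s) * η t φ) θ +
      Complex.I / (Real.sin θ : ℂ) * deriv (fun p => (Real.sin θ : ℂ) ^ (-s) * η θ p) φ)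

/-- The operator `ð̄` acting on a function `η(θ,φ)` of spin weight `s`:
`ð̄η = (1/√2)(sinθ)^{-s} (∂_θ − (i/sinθ)∂_φ)((sinθ)^{s} η)`. -/
def ethbar (s : ℤ) (η : ℝ → ℝ → ℂ) (θ φ : ℝ) : ℂ :=
  (Real.sqrt 2 : ℂ)⁻¹ * (Real.sin θ : ℂ) ^ (-s) *
    (deriv (fun t => (Real.sin t : ℂ) ^ s * η t φ) θ -
      Complex.I / (Real.sin θ : ℂ) * deriv (fun p => (Real.sin θ : ℂ) ^ s * η θ p) φ)

/-- The stutzfunction as a (complex-valued) function of the spherical coordinates: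
`H(θ,φ) = H(ℓ(θ,φ))`. -/
def HC (H : (Fin 3 → ℝ) → ℝ) (θ φ : ℝ) : ℂ := (H (sphL θ φ) : ℂ)

/-- `ðH` of the (spin-weight 0) stutzfunction. -/
def ethH (H : (Fin 3 → ℝ) → ℝ) : ℝ → ℝ → ℂ := eth 0 (HC H)

/-- `ð̄H` (spin weight `-1`). -/
def ethbarH (H : (Fin 3 → ℝ) → ℝ) : ℝ → ℝ → ℂ := ethbar 0 (HC H)

/-- `ð²H`: `ð` (at spin weight 1) applied to `ðH`. -/
def eth2H (H : (Fin 3 → ℝ) → ℝ) : ℝ → ℝ → ℂ := eth 1 (ethH H)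

/-- `ð̄²H`: `ð̄` (at spin weight `-1`) applied to `ð̄H`. -/
def ethbar2H (H : (Fin 3 → ℝ) → ℝ) : ℝ → ℝ → ℂ := ethbar (-1) (ethbarH H)

/-- `ðð̄H`: `ð` (at spin weight `-1`) applied to `ð̄H`; it is real. -/
def ethethbarH (H : (Fin 3 → ℝ) → ℝ) : ℝ → ℝ → ℂ := eth (-1) (ethbarH H)

/-- The parametrised surface `x(θ,φ) = H ℓ + (ð̄H) m + (ðH) conj(m)`; this vector is real,
and we record its (real) components. -/
def surf (H : (Fin 3 → ℝ) → ℝ) (θ φ : ℝ) : Fin 3 → ℝ := fun i =>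
  (HC H θ φ * (sphL θ φ i : ℂ) + ethbarH H θ φ * sphM θ φ i +
    ethH H θ φ * (starRingEnd ℂ) (sphM θ φ i)).re

/-- `J(θ,φ) = (H + ðð̄H)² − (ð²H)(ð̄²H)`; this quantity is real and we take its real part. -/
def Jfun (H : (Fin 3 → ℝ) → ℝ) (θ φ : ℝ) : ℝ :=
  ((HC H θ φ + ethethbarH H θ φ) ^ 2 - eth2H H θ φ * ethbar2H H θ φ).re

/-- The Euclidean norm on `ℝ³`. -/
def norm3 (v : Fin 3 → ℝ) : ℝ := Real.sqrt (v 0 ^ 2 + v 1 ^ 2 + v 2 ^ 2)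

/-- The Euclidean dot product on `ℝ³`. -/
def dot3 (u v : Fin 3 → ℝ) : ℝ := ∑ i, u i * v i

lemma aux_partials (G : ℝ × ℝ → ℝ) (hG : ContDiff ℝ (⊤ : ℕ∞) G) (θ φ : ℝ) :
    ∃ (A B : ℝ → ℝ → ℝ) (a b d : ℝ),
      (∀ t p, HasDerivAt (fun t => G (t, p)) (A t p) t) ∧
      (∀ t p, HasDerivAt (fun p => G (t, p)) (B t p) p) ∧
      HasDerivAt (fun t => A t φ) a θ ∧ HasDerivAt (fun p => A θ p) b φ ∧
      HasDerivAt (fun t => B t φ) b θ ∧ HasDerivAt (fun p => B θ p) d φ := by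
  have h1 : ∀ t p : ℝ, HasDerivAt (fun t : ℝ => ((t, p) : ℝ × ℝ)) (1, 0) t := fun t p =>
    (hasDerivAt_id t).prodMk (hasDerivAt_const t p)
  have h2 : ∀ t p : ℝ, HasDerivAt (fun p : ℝ => ((t, p) : ℝ × ℝ)) (0, 1) p := fun t p =>
    (hasDerivAt_const p t).prodMk (hasDerivAt_id p)
  have hd : ∀ x, HasFDerivAt G (fderiv ℝ G x) x := fun x =>
    (hG.differentiable (by simp) x).hasFDerivAt
  have hG' : ContDiff ℝ 1 (fderiv ℝ G) := hG.fderiv_right (by norm_cast)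
  have hdd : HasFDerivAt (fderiv ℝ G) (fderiv ℝ (fderiv ℝ G) (θ, φ)) (θ, φ) :=
    (hG'.differentiable (by simp) _).hasFDerivAt
  have hsym := second_derivative_symmetric hd hdd (1, 0) (0, 1)
  have k1 := hdd.comp_hasDerivAt θ (h1 θ φ)
  have k2 := hdd.comp_hasDerivAt φ (h2 θ φ)
  refine ⟨fun t p => fderiv ℝ G (t, p) (1, 0), fun t p => fderiv ℝ G (t, p) (0, 1),
    fderiv ℝ (fderiv ℝ G) (θ, φ) (1, 0) (1, 0), fderiv ℝ (fderiv ℝ G) (θ, φ) (0, 1) (1, 0),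
    fderiv ℝ (fderiv ℝ G) (θ, φ) (0, 1) (0, 1),
    fun t p => (hd (t, p)).comp_hasDerivAt t (h1 t p),
    fun t p => (hd (t, p)).comp_hasDerivAt p (h2 t p), ?_, ?_, ?_, ?_⟩
  · simpa using k1.clm_apply (hasDerivAt_const θ ((1, 0) : ℝ × ℝ))
  · simpa using k2.clm_apply (hasDerivAt_const φ ((1, 0) : ℝ × ℝ))
  · rw [← hsym]
    simpa using k1.clm_apply (hasDerivAt_const θ ((0, 1) : ℝ × ℝ))
  · simpa using k2.clm_apply (hasDerivAt_const φ ((0, 1) : ℝ × ℝ))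

lemma sphL_ne (t p : ℝ) : sphL t p ≠ 0 := by
  intro h
  have h0 := congrFun h 0
  have h1 := congrFun h 1
  have h2 := congrFun h 2
  simp only [sphL, Matrix.cons_val, Pi.zero_apply] at h0 h1 h2
  have e1 := Real.sin_sq_add_cos_sq t
  have e2 := Real.sin_sq_add_cos_sq p
  have : Real.sin t ^ 2 * (Real.sin p ^ 2 + Real.cos p ^ 2) = 0 := by
    linear_combination (Real.sin t * Real.cos p) * h0 + (Real.sin t * Real.sin p) * h1
  rw [e2, h2] at *
  norm_num at e1 this
  rw [this] at e1
  norm_num at e1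

lemma aux_contDiff (H : (Fin 3 → ℝ) → ℝ)
    (hH : ContDiffOn ℝ (⊤ : ℕ∞) H {v : Fin 3 → ℝ | v ≠ 0}) :
    ContDiff ℝ (⊤ : ℕ∞) (fun x : ℝ × ℝ => H (sphL x.1 x.2)) := by
  have hs : ContDiff ℝ (⊤ : ℕ∞) (fun x : ℝ × ℝ => sphL x.1 x.2) := by
    rw [contDiff_pi]
    intro i
    fin_cases i <;> simp [sphL] <;> fun_prop
  exact hH.comp_contDiff hs (fun x => sphL_ne _ _)

lemma sqrt2_inv_sq : ((Real.sqrt 2 : ℂ)⁻¹) ^ 2 = 1 / 2 := by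
  rw [inv_pow, ← Complex.ofReal_pow, Real.sq_sqrt (by norm_num)]
  norm_num

lemma aux_ethH (H : (Fin 3 → ℝ) → ℝ) (A B : ℝ → ℝ → ℝ)
    (hA : ∀ t p, HasDerivAt (fun t => H (sphL t p)) (A t p) t)
    (hB : ∀ t p, HasDerivAt (fun p => H (sphL t p)) (B t p) p) :
    ethH H = fun t p => (Real.sqrt 2 : ℂ)⁻¹ *
      ((A t p : ℂ) + Complex.I / (Real.sin t : ℂ) * (B t p : ℂ)) := by
  funext t p
  have h1 := (hA t p).ofReal_comp.deriv
  have h2 := (hB t p).ofReal_comp.deriv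
  simp only [ethH, eth, HC, neg_zero, zpow_zero, one_mul, mul_one, h1, h2]

lemma aux_ethbarH (H : (Fin 3 → ℝ) → ℝ) (A B : ℝ → ℝ → ℝ)
    (hA : ∀ t p, HasDerivAt (fun t => H (sphL t p)) (A t p) t)
    (hB : ∀ t p, HasDerivAt (fun p => H (sphL t p)) (B t p) p) :
    ethbarH H = fun t p => (Real.sqrt 2 : ℂ)⁻¹ *
      ((A t p : ℂ) - Complex.I / (Real.sin t : ℂ) * (B t p : ℂ)) := by
  funext t p
  have h1 := (hA t p).ofReal_comp.deriv
  have h2 := (hB t p).ofReal_comp.deriv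
  simp only [ethbarH, ethbar, HC, neg_zero, zpow_zero, one_mul, mul_one, h1, h2]

lemma aux_surf (H : (Fin 3 → ℝ) → ℝ) (A B : ℝ → ℝ → ℝ)
    (hA : ∀ t p, HasDerivAt (fun t => H (sphL t p)) (A t p) t)
    (hB : ∀ t p, HasDerivAt (fun p => H (sphL t p)) (B t p) p) (t p : ℝ) :
    surf H t p = ![
      H (sphL t p) * (Real.sin t * Real.cos p) + A t p * (Real.cos t * Real.cos p)
        - B t p / Real.sin t * Real.sin p,
      H (sphL t p) * (Real.sin t * Real.sin p) + A t p * (Real.cos t * Real.sin p)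
        + B t p / Real.sin t * Real.cos p,
      H (sphL t p) * Real.cos t - A t p * Real.sin t] := by
  have key : ∀ (f a b u v l : ℝ), ((f : ℂ) * (l : ℂ) +
      (Real.sqrt 2 : ℂ)⁻¹ * ((a : ℂ) - Complex.I / (Real.sin t : ℂ) * (b : ℂ)) *
        ((Real.sqrt 2 : ℂ)⁻¹ * ((u : ℂ) + Complex.I * (v : ℂ))) +
      (Real.sqrt 2 : ℂ)⁻¹ * ((a : ℂ) + Complex.I / (Real.sin t : ℂ) * (b : ℂ)) *
        (starRingEnd ℂ) ((Real.sqrt 2 : ℂ)⁻¹ * ((u : ℂ) + Complex.I * (v : ℂ)))).re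
      = f * l + a * u + b / Real.sin t * v := by
    intro f a b u v l
    rw [← Complex.ofReal_re (f * l + a * u + b / Real.sin t * v)]
    congr 1
    simp only [map_mul, map_add, map_inv₀, Complex.conj_ofReal, Complex.conj_I]
    push_cast
    simp only [div_eq_mul_inv]
    linear_combination (2 * ((a : ℂ) * u - Complex.I ^ 2 * b * (Complex.sin t)⁻¹ * v)) *
      sqrt2_inv_sq - (b : ℂ) * (Complex.sin t)⁻¹ * v * Complex.I_sq
  funext i
  simp only [surf, aux_ethH H A B hA hB, aux_ethbarH H A B hA hB, HC]
  fin_cases i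
  · have := key (H (sphL t p)) (A t p) (B t p) (Real.cos t * Real.cos p) (-Real.sin p)
      (Real.sin t * Real.cos p)
    simp only [sphM, sphL, Matrix.cons_val, Fin.zero_eta, Fin.mk_one, Fin.reduceFinMk] at this ⊢
    rw [show ∀ x y : ℝ, (x : ℂ) - Complex.I * (y : ℂ) = x + Complex.I * ((-y : ℝ) : ℂ) by
      intros; push_cast; ring]
    rw [this]; ring
  · have := key (H (sphL t p)) (A t p) (B t p) (Real.cos t * Real.sin p) (Real.cos p)
      (Real.sin t * Real.sin p)
    simp only [sphM, sphL, Matrix.cons_val, Fin.zero_eta, Fin.mk_one, Fin.reduceFinMk] at this ⊢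
    rw [this]
  · have := key (H (sphL t p)) (A t p) (B t p) (-Real.sin t) 0 (Real.cos t)
    simp only [sphM, sphL, Matrix.cons_val, Fin.zero_eta, Fin.mk_one, Fin.reduceFinMk] at this ⊢
    rw [show -((Real.sin t : ℝ) : ℂ) = ((-Real.sin t : ℝ) : ℂ) + Complex.I * ((0 : ℝ) : ℂ) by
      push_cast; ring]
    rw [this]; ring

lemma aux_J (H : (Fin 3 → ℝ) → ℝ) (A B : ℝ → ℝ → ℝ) (θ φ a b d : ℝ)
    (hs : Real.sin θ ≠ 0)
    (hA : ∀ t p, HasDerivAt (fun t => H (sphL t p)) (A t p) t)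
    (hB : ∀ t p, HasDerivAt (fun p => H (sphL t p)) (B t p) p)
    (h1 : HasDerivAt (fun t => A t φ) a θ) (h2 : HasDerivAt (fun p => A θ p) b φ)
    (h3 : HasDerivAt (fun t => B t φ) b θ) (h4 : HasDerivAt (fun p => B θ p) d φ) :
    Jfun H θ φ = (H (sphL θ φ) + a) *
        (H (sphL θ φ) + A θ φ * Real.cos θ / Real.sin θ + d / Real.sin θ ^ 2) -
      (b / Real.sin θ - B θ φ * Real.cos θ / Real.sin θ ^ 2) ^ 2 := by
  have hsC : (Real.sin θ : ℂ) ≠ 0 := by exact_mod_cast hs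
  have hsin := (Real.hasDerivAt_sin θ).ofReal_comp
  have k1 := h1.ofReal_comp
  have k2 := h2.ofReal_comp
  have k3 := h3.ofReal_comp
  have k4 := h4.ofReal_comp
  have I2 := Complex.I_sq
  set r : ℂ := (Real.sqrt 2 : ℂ)⁻¹ with hr
  have hr2 : r ^ 2 = 1 / 2 := sqrt2_inv_sq
  have hinv := hsin.inv hsC
  have hq : HasDerivAt (fun t => Complex.I / (Real.sin t : ℂ) * (B t φ : ℂ))
      (Complex.I * (b / Real.sin θ - B θ φ * Real.cos θ / Real.sin θ ^ 2)) θ := by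
    refine ((hinv.const_mul Complex.I).mul k3).congr_deriv ?_
    simp only [Pi.inv_apply]
    field_simp
    ring
  have tP := ((k1.add hq).const_mul r)
  have tM := ((k1.sub hq).const_mul r)
  have qq := (k4.const_mul (Complex.I / (Real.sin θ : ℂ)))
  have pP := ((k2.add qq).const_mul r)
  have pM := ((k2.sub qq).const_mul r)
  have e1 := (hinv.mul tP).deriv
  have e2 := (pP.const_mul (Real.sin θ : ℂ)⁻¹).deriv
  have e3 := (hinv.mul tM).deriv
  have e4 := (pM.const_mul (Real.sin θ : ℂ)⁻¹).deriv
  have e5 := (hsin.mul tM).deriv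
  have e6 := (pM.const_mul (Real.sin θ : ℂ)).deriv
  simp only [Pi.mul_def, Pi.add_def, Pi.sub_def, Pi.inv_def] at e1 e2 e3 e4 e5 e6
  have v1 : eth2H H θ φ = 1 / 2 * ((a - Real.cos θ * A θ φ / Real.sin θ - d / Real.sin θ ^ 2)
      + 2 * Complex.I * (b / Real.sin θ - B θ φ * Real.cos θ / Real.sin θ ^ 2)) := by
    simp only [eth2H, eth, aux_ethH H A B hA hB, zpow_one, zpow_neg, ← hr, e1, e2]
    rw [← hr2]
    generalize (Real.sin θ : ℂ) = s at *
    generalize (Real.cos θ : ℂ) = c at *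
    field_simp
    linear_combination r ^ 2 * (d : ℂ) * I2
  have v2 : ethbar2H H θ φ = 1 / 2 * ((a - Real.cos θ * A θ φ / Real.sin θ - d / Real.sin θ ^ 2)
      - 2 * Complex.I * (b / Real.sin θ - B θ φ * Real.cos θ / Real.sin θ ^ 2)) := by
    simp only [ethbar2H, ethbar, aux_ethbarH H A B hA hB, zpow_one, zpow_neg, neg_neg, ← hr, e3, e4]
    rw [← hr2]
    generalize (Real.sin θ : ℂ) = s at *
    generalize (Real.cos θ : ℂ) = c at *
    field_simp
    linear_combination r ^ 2 * (d : ℂ) * I2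
  have v3 : ethethbarH H θ φ =
      1 / 2 * (a + Real.cos θ * A θ φ / Real.sin θ + d / Real.sin θ ^ 2) := by
    simp only [ethethbarH, eth, aux_ethbarH H A B hA hB, zpow_one, zpow_neg, neg_neg, ← hr, e5, e6]
    rw [← hr2]
    generalize (Real.sin θ : ℂ) = s at *
    generalize (Real.cos θ : ℂ) = c at *
    field_simp
    linear_combination -r ^ 2 * (d : ℂ) * I2
  rw [Jfun, v1, v2, v3, HC, ← Complex.ofReal_re ((H (sphL θ φ) + a) * _ - _)]
  congr 1
  push_cast at hsC ⊢
  generalize Complex.sin θ = s at *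
  generalize Complex.cos θ = c at *
  linear_combination ((b : ℂ) / s - B θ φ * c / s ^ 2) ^ 2 * I2

/-- The coordinate area element of the surface with stutzfunction `H`:
`‖∂_θ x × ∂_φ x‖ = |J| sinθ`. -/
theorem stmt1 (H : (Fin 3 → ℝ) → ℝ)
    (hH : ContDiffOn ℝ (⊤ : ℕ∞) H {v : Fin 3 → ℝ | v ≠ 0})
    (hhom : ∀ v : Fin 3 → ℝ, v ≠ 0 → ∀ t : ℝ, 0 < t → H (t • v) = H v) :
    ∀ θ ∈ Set.Ioo 0 Real.pi, ∀ φ : ℝ,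
      norm3 (crossProduct (fun i => deriv (fun t => surf H t φ i) θ)
          (fun i => deriv (fun p => surf H θ p i) φ)) =
        |Jfun H θ φ| * Real.sin θ := by
  intro θ hθ φ
  have hpos : 0 < Real.sin θ := Real.sin_pos_of_mem_Ioo hθ
  have hs : Real.sin θ ≠ 0 := hpos.ne'
  obtain ⟨A, B, a, b, d, hA, hB, h1, h2, h3, h4⟩ := aux_partials _ (aux_contDiff H hH) θ φ
  simp only at hA hB
  rw [aux_J H A B θ φ a b d hs hA hB h1 h2 h3 h4]
  simp only [aux_surf H A B hA hB]
  have hsn := Real.hasDerivAt_sin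
  have hcs := Real.hasDerivAt_cos
  have f1 := hA θ φ
  have f2 := hB θ φ
  have q1 := h3.div (hsn θ) hs
  have q2 := h4.div_const (Real.sin θ)
  have x0 := (((f1.mul ((hsn θ).mul_const (Real.cos φ))).add
    (h1.mul ((hcs θ).mul_const (Real.cos φ)))).sub (q1.mul_const (Real.sin φ))).deriv
  have x1 := (((f1.mul ((hsn θ).mul_const (Real.sin φ))).add
    (h1.mul ((hcs θ).mul_const (Real.sin φ)))).add (q1.mul_const (Real.cos φ))).deriv
  have x2 := ((f1.mul (hcs θ)).sub (h1.mul (hsn θ))).deriv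
  have y0 := (((f2.mul ((hcs φ).const_mul (Real.sin θ))).add
    (h2.mul ((hcs φ).const_mul (Real.cos θ)))).sub (q2.mul (hsn φ))).deriv
  have y1 := (((f2.mul ((hsn φ).const_mul (Real.sin θ))).add
    (h2.mul ((hsn φ).const_mul (Real.cos θ)))).add (q2.mul (hcs φ))).deriv
  have y2 := ((f2.mul_const (Real.cos θ)).sub (h2.mul_const (Real.sin θ))).deriv
  simp only [Pi.mul_def, Pi.add_def, Pi.sub_def, Pi.div_def] at x0 x1 x2 y0 y1 y2
  simp only [norm3, cross_apply, Matrix.cons_val, x0, x1, x2, y0, y1, y2]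
  have habs : ∀ X : ℝ, |X| * Real.sin θ = Real.sqrt ((X * Real.sin θ) ^ 2) := by
    intro X
    rw [Real.sqrt_sq_eq_abs, abs_mul, abs_of_pos hpos]
  rw [habs]
  have t1 := Real.sin_sq_add_cos_sq θ
  have t2 := Real.sin_sq_add_cos_sq φ
  clear x0 x1 x2 y0 y1 y2 q1 q2 f1 f2 hsn hcs h1 h2 h3 h4 hA hB habs
  generalize H (sphL θ φ) = F at *
  generalize A θ φ = A0 at *
  generalize B θ φ = B0 at *
  generalize Real.sin θ = s at *
  generalize Real.cos θ = c at *
  generalize Real.sin φ = u at *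
  generalize Real.cos φ = v at *
  obtain ⟨P, hP⟩ : ∃ P, P = F + a := ⟨_, rfl⟩
  obtain ⟨Q, hQ⟩ : ∃ Q, Q = b / s - B0 * c / s ^ 2 := ⟨_, rfl⟩
  obtain ⟨R, hR⟩ : ∃ R, R = b - B0 * c / s := ⟨_, rfl⟩
  obtain ⟨T, hT⟩ : ∃ T, T = F * s + A0 * c + d / s := ⟨_, rfl⟩
  have X0 : A0 * (s * v) + F * (c * v) + (a * (c * v) + A0 * (-s * v)) -
      (b * s - B0 * c) / s ^ 2 * u = P * c * v - Q * u := by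
    rw [hP, hQ]; field_simp; ring
  have X1 : A0 * (s * u) + F * (c * u) + (a * (c * u) + A0 * (-s * u)) +
      (b * s - B0 * c) / s ^ 2 * v = P * c * u + Q * v := by
    rw [hP, hQ]; field_simp; ring
  have X2 : A0 * c + F * -s - (a * s + A0 * c) = -P * s := by
    rw [hP]; ring
  have Y0 : B0 * (s * v) + F * (s * -u) + (b * (c * v) + A0 * (c * -u)) -
      (d / s * u + B0 / s * v) = R * c * v - T * u := by
    rw [hR, hT]; field_simp; linear_combination B0 * v * t1
  have Y1 : B0 * (s * u) + F * (s * v) + (b * (c * u) + A0 * (c * v)) +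
      (d / s * v + B0 / s * -u) = R * c * u + T * v := by
    rw [hR, hT]; field_simp; linear_combination B0 * u * t1
  have Y2 : B0 * c - b * s = -R * s := by
    rw [hR]; field_simp; ring
  have hK : ((F + a) * (F + A0 * c / s + d / s ^ 2) -
      (b / s - B0 * c / s ^ 2) ^ 2) * s = P * T - Q * R := by
    rw [hP, hT, hQ, hR]; field_simp
  rw [X0, X1, X2, Y0, Y1, Y2, hK]
  have C0 : (P * c * u + Q * v) * (-R * s) - -P * s * (R * c * u + T * v)
      = (P * T - Q * R) * s * v := by ring
  have C1 : -P * s * (R * c * v - T * u) - (P * c * v - Q * u) * (-R * s)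
      = (P * T - Q * R) * s * u := by ring
  have C2 : (P * c * v - Q * u) * (R * c * u + T * v) - (P * c * u + Q * v) * (R * c * v - T * u)
      = (P * T - Q * R) * c := by
    linear_combination (P * T - Q * R) * c * t2
  rw [C0, C1, C2]
  congr 1
  linear_combination (P * T - Q * R) ^ 2 * s ^ 2 * t2 + (P * T - Q * R) ^ 2 * t1
end
end

section
/- (Steiner's Theorem.) Define, for s ∈ ℝ, A(s) := ∫₀^{2π} ∫₀^{π} [((H+s) + ðð̄H)² − (ð²H)(ð̄²H)] sinθ dθ dφ (the area of the surface with stutzfunction H + s), A := A(0), and M := ∫₀^{2π} ∫₀^{π} (H + ðð̄H) sinθ dθ dφ (the integral of mean curvature). Then for all s: A(s) = A + 2sM + 4πs². Moreover, for any V₀ ∈ ℝ, the function V(s) := V₀ + ∫₀^{s} A(u) du satisfies V(s) = V₀ + sA + s²M + (4/3)πs³. -/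
noncomputable section

/-- The area of the parallel surface with stutzfunction `H + s`:
`A(s) = ∫₀^{2π}∫₀^{π} [((H+s) + ðð̄H)² − (ð²H)(ð̄²H)] sinθ dθ dφ`. -/
def Asteiner (H : (Fin 3 → ℝ) → ℝ) (s : ℝ) : ℝ :=
  ∫ φ in (0:ℝ)..(2 * Real.pi), ∫ θ in (0:ℝ)..Real.pi,
    (((HC H θ φ + (s : ℂ) + ethethbarH H θ φ) ^ 2 -
      eth2H H θ φ * ethbar2H H θ φ).re) * Real.sin θ

/-- The integral of mean curvature `M = ∫₀^{2π}∫₀^{π} (H + ðð̄H) sinθ dθ dφ`. -/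
def Msteiner (H : (Fin 3 → ℝ) → ℝ) : ℝ :=
  ∫ φ in (0:ℝ)..(2 * Real.pi), ∫ θ in (0:ℝ)..Real.pi,
    (HC H θ φ + ethethbarH H θ φ).re * Real.sin θ

section SteinerAux

/-- The vector `∂ℓ/∂θ`. -/
def auxT (θ φ : ℝ) : Fin 3 → ℝ :=
  ![Real.cos θ * Real.cos φ, Real.cos θ * Real.sin φ, -Real.sin θ]

/-- The unit vector along `∂ℓ/∂φ`. -/
def auxE (φ : ℝ) : Fin 3 → ℝ := ![-Real.sin φ, Real.cos φ, 0]

/-- The horizontal radial vector. -/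
def auxR (φ : ℝ) : Fin 3 → ℝ := ![Real.cos φ, Real.sin φ, 0]

lemma sphL_ne_s4 (θ φ : ℝ) : sphL θ φ ≠ 0 := by
  intro h
  have h0 := congrFun h 0
  have h1 := congrFun h 1
  have h2 := congrFun h 2
  simp [sphL] at h0 h1 h2
  have := Real.sin_sq_add_cos_sq θ
  have := Real.sin_sq_add_cos_sq φ
  grind

lemma sphL_dθ (θ φ : ℝ) : HasDerivAt (fun t => sphL t φ) (auxT θ φ) θ := by
  rw [hasDerivAt_pi]
  intro i
  fin_cases i
  · simpa [sphL, auxT] using (Real.hasDerivAt_sin θ).mul_const (Real.cos φ)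
  · simpa [sphL, auxT] using (Real.hasDerivAt_sin θ).mul_const (Real.sin φ)
  · simpa [sphL, auxT] using (Real.hasDerivAt_cos θ)

lemma sphL_dφ (θ φ : ℝ) : HasDerivAt (fun p => sphL θ p) (Real.sin θ • auxE φ) φ := by
  rw [hasDerivAt_pi]
  intro i
  fin_cases i
  · simpa [sphL, auxE] using (Real.hasDerivAt_cos φ).const_mul (Real.sin θ)
  · simpa [sphL, auxE] using (Real.hasDerivAt_sin φ).const_mul (Real.sin θ)
  · simpa [sphL, auxE] using (hasDerivAt_const φ (Real.cos θ))

lemma auxT_dθ (θ φ : ℝ) : HasDerivAt (fun t => auxT t φ) (-sphL θ φ) θ := by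
  rw [hasDerivAt_pi]
  intro i
  fin_cases i
  · simpa [sphL, auxT] using (Real.hasDerivAt_cos θ).mul_const (Real.cos φ)
  · simpa [sphL, auxT] using (Real.hasDerivAt_cos θ).mul_const (Real.sin φ)
  · simpa [sphL, auxT] using (Real.hasDerivAt_sin θ).fun_neg

lemma auxT_dφ (θ φ : ℝ) : HasDerivAt (fun p => auxT θ p) (Real.cos θ • auxE φ) φ := by
  rw [hasDerivAt_pi]
  intro i
  fin_cases i
  · simpa [auxE, auxT] using (Real.hasDerivAt_cos φ).const_mul (Real.cos θ)
  · simpa [auxE, auxT] using (Real.hasDerivAt_sin φ).const_mul (Real.cos θ)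
  · simpa [auxE, auxT] using (hasDerivAt_const φ (-Real.sin θ))

lemma auxE_dφ (φ : ℝ) : HasDerivAt (fun p => auxE p) (-auxR φ) φ := by
  rw [hasDerivAt_pi]
  intro i
  fin_cases i
  · simpa [auxE, auxR] using (Real.hasDerivAt_sin φ).fun_neg
  · simpa [auxE, auxR] using (Real.hasDerivAt_cos φ)
  · simpa [auxE, auxR] using (hasDerivAt_const φ (0:ℝ))

lemma auxR_eq (θ φ : ℝ) : auxR φ = Real.cos θ • auxT θ φ + Real.sin θ • sphL θ φ := by
  have := Real.sin_sq_add_cos_sq θ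
  ext i
  fin_cases i <;> simp [auxR, auxT, sphL]
  · linear_combination (-Real.cos φ) * this
  · linear_combination (-Real.sin φ) * this
  · ring

lemma sphL_cont : Continuous (fun p : ℝ × ℝ => sphL p.1 p.2) := by
  refine continuous_pi fun i => ?_
  fin_cases i <;> simp [sphL] <;> fun_prop

lemma auxT_cont : Continuous (fun p : ℝ × ℝ => auxT p.1 p.2) := by
  refine continuous_pi fun i => ?_
  fin_cases i <;> simp [auxT] <;> fun_prop

lemma auxE_cont : Continuous (fun p : ℝ × ℝ => auxE p.2) := by
  refine continuous_pi fun i => ?_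
  fin_cases i <;> simp [auxE] <;> fun_prop

variable (H : (Fin 3 → ℝ) → ℝ)

/-- `∂_θ H + lam * (1/sinθ) ∂_φ H`. -/
def auxEta (lam : ℂ) (θ φ : ℝ) : ℂ :=
  ((fderiv ℝ H (sphL θ φ) (auxT θ φ) : ℝ) : ℂ) + lam * ((fderiv ℝ H (sphL θ φ) (auxE φ) : ℝ) : ℂ)

/-- The second-order quantity, continuous everywhere. -/
def auxS (n : ℤ) (lam mu : ℂ) (θ φ : ℝ) : ℂ :=
  ((fderiv ℝ (fderiv ℝ H) (sphL θ φ) (auxT θ φ) (auxT θ φ) : ℝ) : ℂ)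
  + lam * ((fderiv ℝ (fderiv ℝ H) (sphL θ φ) (auxT θ φ) (auxE φ) : ℝ) : ℂ)
  + mu * ((fderiv ℝ (fderiv ℝ H) (sphL θ φ) (auxE φ) (auxT θ φ) : ℝ) : ℂ)
  + mu * lam * ((fderiv ℝ (fderiv ℝ H) (sphL θ φ) (auxE φ) (auxE φ) : ℝ) : ℂ)
  + ((n : ℂ) - 1) * ((fderiv ℝ H (sphL θ φ) (sphL θ φ) : ℝ) : ℂ)

variable {H}

lemma aux_open : IsOpen {v : Fin 3 → ℝ | v ≠ 0} := isOpen_ne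

lemma aux_K (hH : ContDiffOn ℝ (⊤ : ℕ∞) H {v : Fin 3 → ℝ | v ≠ 0}) :
    ContDiffOn ℝ (⊤ : ℕ∞) (fderiv ℝ H) {v : Fin 3 → ℝ | v ≠ 0} :=
  hH.fderiv_of_isOpen aux_open (by simp)

lemma aux_K2 (hH : ContDiffOn ℝ (⊤ : ℕ∞) H {v : Fin 3 → ℝ | v ≠ 0}) :
    ContDiffOn ℝ (⊤ : ℕ∞) (fderiv ℝ (fderiv ℝ H)) {v : Fin 3 → ℝ | v ≠ 0} :=
  (aux_K hH).fderiv_of_isOpen aux_open (by simp)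

lemma aux_H_at (hH : ContDiffOn ℝ (⊤ : ℕ∞) H {v : Fin 3 → ℝ | v ≠ 0}) (θ φ : ℝ) :
    HasFDerivAt H (fderiv ℝ H (sphL θ φ)) (sphL θ φ) :=
  ((hH.differentiableOn (by simp)).differentiableAt
    (aux_open.mem_nhds (sphL_ne_s4 θ φ))).hasFDerivAt

lemma aux_K_at (hH : ContDiffOn ℝ (⊤ : ℕ∞) H {v : Fin 3 → ℝ | v ≠ 0}) (θ φ : ℝ) :
    HasFDerivAt (fderiv ℝ H) (fderiv ℝ (fderiv ℝ H) (sphL θ φ)) (sphL θ φ) :=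
  (((aux_K hH).differentiableOn (by simp)).differentiableAt
    (aux_open.mem_nhds (sphL_ne_s4 θ φ))).hasFDerivAt

lemma aux_contH (hH : ContDiffOn ℝ (⊤ : ℕ∞) H {v : Fin 3 → ℝ | v ≠ 0}) :
    Continuous (fun p : ℝ × ℝ => HC H p.1 p.2) :=
  Complex.continuous_ofReal.comp
    (hH.continuousOn.comp_continuous sphL_cont fun p => sphL_ne_s4 p.1 p.2)

lemma aux_contS (hH : ContDiffOn ℝ (⊤ : ℕ∞) H {v : Fin 3 → ℝ | v ≠ 0}) (n : ℤ) (lam mu : ℂ) :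
    Continuous (fun p : ℝ × ℝ => auxS H n lam mu p.1 p.2) := by
  have h1 := (aux_K hH).continuousOn.comp_continuous sphL_cont fun p => sphL_ne_s4 p.1 p.2
  have h2 := (aux_K2 hH).continuousOn.comp_continuous sphL_cont fun p => sphL_ne_s4 p.1 p.2
  have hL := sphL_cont
  have hT := auxT_cont
  have hE := auxE_cont
  have c1 := Complex.continuous_ofReal.comp ((h2.clm_apply hT).clm_apply hT)
  have c2 := Complex.continuous_ofReal.comp ((h2.clm_apply hT).clm_apply hE)
  have c3 := Complex.continuous_ofReal.comp ((h2.clm_apply hE).clm_apply hT)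
  have c4 := Complex.continuous_ofReal.comp ((h2.clm_apply hE).clm_apply hE)
  have c5 := Complex.continuous_ofReal.comp (h1.clm_apply hL)
  exact (((c1.add (continuous_const.mul c2)).add (continuous_const.mul c3)).add
    (continuous_const.mul c4)).add (continuous_const.mul c5)

lemma auxHC_dθ (hH : ContDiffOn ℝ (⊤ : ℕ∞) H {v : Fin 3 → ℝ | v ≠ 0}) (θ φ : ℝ) :
    HasDerivAt (fun t => HC H t φ) ((fderiv ℝ H (sphL θ φ) (auxT θ φ) : ℝ) : ℂ) θ :=
  ((aux_H_at hH θ φ).comp_hasDerivAt θ (sphL_dθ θ φ)).ofReal_comp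

lemma auxHC_dφ (hH : ContDiffOn ℝ (⊤ : ℕ∞) H {v : Fin 3 → ℝ | v ≠ 0}) (θ φ : ℝ) :
    HasDerivAt (fun p => HC H θ p)
      ((Real.sin θ * fderiv ℝ H (sphL θ φ) (auxE φ) : ℝ) : ℂ) φ := by
  have := ((aux_H_at hH θ φ).comp_hasDerivAt φ (sphL_dφ θ φ)).ofReal_comp
  refine this.congr_deriv ?_
  simp

lemma aux_ethH_s4 (hH : ContDiffOn ℝ (⊤ : ℕ∞) H {v : Fin 3 → ℝ | v ≠ 0}) (θ φ : ℝ)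
    (hs : Real.sin θ ≠ 0) :
    ethH H θ φ = (Real.sqrt 2 : ℂ)⁻¹ * auxEta H Complex.I θ φ := by
  have hs' : (Real.sin θ : ℂ) ≠ 0 := by exact_mod_cast hs
  simp only [ethH, eth, neg_zero, zpow_zero, one_mul, mul_one]
  rw [(auxHC_dθ hH θ φ).deriv, (auxHC_dφ hH θ φ).deriv, auxEta]
  rw [Complex.ofReal_mul]
  field_simp

lemma aux_ethbarH_s4 (hH : ContDiffOn ℝ (⊤ : ℕ∞) H {v : Fin 3 → ℝ | v ≠ 0}) (θ φ : ℝ)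
    (hs : Real.sin θ ≠ 0) :
    ethbarH H θ φ = (Real.sqrt 2 : ℂ)⁻¹ * auxEta H (-Complex.I) θ φ := by
  have hs' : (Real.sin θ : ℂ) ≠ 0 := by exact_mod_cast hs
  simp only [ethbarH, ethbar, neg_zero, zpow_zero, one_mul, mul_one]
  rw [(auxHC_dθ hH θ φ).deriv, (auxHC_dφ hH θ φ).deriv, auxEta]
  rw [Complex.ofReal_mul]
  field_simp
  ring

lemma auxEta_dθ (hH : ContDiffOn ℝ (⊤ : ℕ∞) H {v : Fin 3 → ℝ | v ≠ 0}) (lam : ℂ) (θ φ : ℝ) :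
    HasDerivAt (fun t => auxEta H lam t φ)
      (((fderiv ℝ (fderiv ℝ H) (sphL θ φ) (auxT θ φ) (auxT θ φ) : ℝ) : ℂ)
        - ((fderiv ℝ H (sphL θ φ) (sphL θ φ) : ℝ) : ℂ)
        + lam * ((fderiv ℝ (fderiv ℝ H) (sphL θ φ) (auxT θ φ) (auxE φ) : ℝ) : ℂ)) θ := by
  have hK := (aux_K_at hH θ φ).comp_hasDerivAt θ (sphL_dθ θ φ)
  have h1 := (hK.clm_apply (auxT_dθ θ φ)).ofReal_comp
  have h2 := (hK.clm_apply (hasDerivAt_const θ (auxE φ))).ofReal_comp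
  refine (h1.add (h2.const_mul lam)).congr_deriv ?_
  simp
  ring

lemma auxEta_dφ (hH : ContDiffOn ℝ (⊤ : ℕ∞) H {v : Fin 3 → ℝ | v ≠ 0}) (lam : ℂ) (θ φ : ℝ) :
    HasDerivAt (fun p => auxEta H lam θ p)
      ((Real.sin θ : ℂ) * ((fderiv ℝ (fderiv ℝ H) (sphL θ φ) (auxE φ) (auxT θ φ) : ℝ) : ℂ)
        + (Real.cos θ : ℂ) * ((fderiv ℝ H (sphL θ φ) (auxE φ) : ℝ) : ℂ)
        + lam * ((Real.sin θ : ℂ) *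
            ((fderiv ℝ (fderiv ℝ H) (sphL θ φ) (auxE φ) (auxE φ) : ℝ) : ℂ)
          - ((Real.cos θ : ℂ) * ((fderiv ℝ H (sphL θ φ) (auxT θ φ) : ℝ) : ℂ)
            + (Real.sin θ : ℂ) * ((fderiv ℝ H (sphL θ φ) (sphL θ φ) : ℝ) : ℂ)))) φ := by
  have hK := (aux_K_at hH θ φ).comp_hasDerivAt φ (sphL_dφ θ φ)
  have h1 := (hK.clm_apply (auxT_dφ θ φ)).ofReal_comp
  have h2 := (hK.clm_apply (auxE_dφ φ)).ofReal_comp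
  refine (h1.add (h2.const_mul lam)).congr_deriv ?_
  rw [auxR_eq θ φ]
  simp only [Function.comp, map_smul, map_neg, map_add, ContinuousLinearMap.smul_apply,
    smul_eq_mul, Complex.ofReal_add, Complex.ofReal_mul, Complex.ofReal_neg]
  ring

lemma aux_op (hH : ContDiffOn ℝ (⊤ : ℕ∞) H {v : Fin 3 → ℝ | v ≠ 0})
    (n : ℤ) (lam mu : ℂ) (hmu : mu = n * lam) (hml : mu * lam = -n)
    (η : ℝ → ℝ → ℂ)
    (hη : ∀ θ φ, Real.sin θ ≠ 0 → η θ φ = (Real.sqrt 2 : ℂ)⁻¹ * auxEta H lam θ φ)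
    (θ φ : ℝ) (hs : Real.sin θ ≠ 0) :
    (Real.sqrt 2 : ℂ)⁻¹ * (Real.sin θ : ℂ) ^ n *
    (deriv (fun t => (Real.sin t : ℂ) ^ (-n) * η t φ) θ +
      mu / (Real.sin θ : ℂ) * deriv (fun p => (Real.sin θ : ℂ) ^ (-n) * η θ p) φ)
    = (Real.sqrt 2 : ℂ)⁻¹ * (Real.sqrt 2 : ℂ)⁻¹ * auxS H n lam mu θ φ := by
  have hs' : (Real.sin θ : ℂ) ≠ 0 := by exact_mod_cast hs
  have e1 : (fun t => (Real.sin t : ℂ) ^ (-n) * η t φ) =ᶠ[nhds θ]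
      (fun t => (Real.sin t : ℂ) ^ (-n) * ((Real.sqrt 2 : ℂ)⁻¹ * auxEta H lam t φ)) := by
    filter_upwards [Real.continuous_sin.continuousAt.eventually_ne hs] with t ht
    rw [hη t φ ht]
  have e2 : (fun p => (Real.sin θ : ℂ) ^ (-n) * η θ p) =
      (fun p => (Real.sin θ : ℂ) ^ (-n) * ((Real.sqrt 2 : ℂ)⁻¹ * auxEta H lam θ p)) := by
    funext p
    rw [hη θ p hs]
  have hz : HasDerivAt (fun t => (Real.sin t : ℂ) ^ (-n))
      (-(n : ℂ) * (Real.sin θ : ℂ) ^ (-n) / (Real.sin θ : ℂ) * (Real.cos θ : ℂ)) θ := by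
    have := ((hasDerivAt_zpow (-n) (Real.sin θ) (Or.inl hs)).comp θ
      (Real.hasDerivAt_sin θ)).ofReal_comp
    have h2 : (fun t => (Real.sin t : ℂ) ^ (-n)) =
      fun y => ((((fun x : ℝ => x ^ (-n)) ∘ Real.sin) y : ℝ) : ℂ) := by
      funext t; simp
    rw [h2]
    refine this.congr_deriv ?_
    rw [Complex.ofReal_mul, Complex.ofReal_mul, Complex.ofReal_zpow, zpow_sub₀ hs']
    push_cast
    field_simp
  rw [e1.deriv_eq, e2, (hz.fun_mul ((auxEta_dθ hH lam θ φ).const_mul _)).deriv,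
    (((auxEta_dφ hH lam θ φ).const_mul _).const_mul _).deriv, auxS, auxEta, zpow_neg]
  have hz0 : (Real.sin θ : ℂ) ^ n ≠ 0 := zpow_ne_zero _ hs'
  generalize (Real.sin θ : ℂ) ^ n = Z at *
  generalize (Real.sqrt 2 : ℂ)⁻¹ = q at *
  generalize (Real.sin θ : ℂ) = S at *
  generalize (Real.cos θ : ℂ) = C at *
  generalize ((fderiv ℝ H (sphL θ φ) (auxT θ φ) : ℝ) : ℂ) = a at *
  generalize ((fderiv ℝ H (sphL θ φ) (auxE φ) : ℝ) : ℂ) = b at *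
  generalize ((fderiv ℝ H (sphL θ φ) (sphL θ φ) : ℝ) : ℂ) = h at *
  generalize ((fderiv ℝ (fderiv ℝ H) (sphL θ φ) (auxT θ φ) (auxT θ φ) : ℝ) : ℂ) = a11 at *
  generalize ((fderiv ℝ (fderiv ℝ H) (sphL θ φ) (auxT θ φ) (auxE φ) : ℝ) : ℂ) = a12 at *
  generalize ((fderiv ℝ (fderiv ℝ H) (sphL θ φ) (auxE φ) (auxT θ φ) : ℝ) : ℂ) = a21 at *
  generalize ((fderiv ℝ (fderiv ℝ H) (sphL θ φ) (auxE φ) (auxE φ) : ℝ) : ℂ) = a22 at *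
  field_simp
  linear_combination (q^2 * C * b) * hmu - (q^2 * (C * a + S * h)) * hml

lemma aux_eth2 (hH : ContDiffOn ℝ (⊤ : ℕ∞) H {v : Fin 3 → ℝ | v ≠ 0}) (θ φ : ℝ)
    (hs : Real.sin θ ≠ 0) : eth2H H θ φ = (Real.sqrt 2 : ℂ)⁻¹ * (Real.sqrt 2 : ℂ)⁻¹ *
      auxS H 1 Complex.I Complex.I θ φ :=
  aux_op hH 1 Complex.I Complex.I (by simp) (by simp) (ethH H) (aux_ethH_s4 hH) θ φ hs

lemma aux_etheth (hH : ContDiffOn ℝ (⊤ : ℕ∞) H {v : Fin 3 → ℝ | v ≠ 0}) (θ φ : ℝ)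
    (hs : Real.sin θ ≠ 0) : ethethbarH H θ φ = (Real.sqrt 2 : ℂ)⁻¹ * (Real.sqrt 2 : ℂ)⁻¹ *
      auxS H (-1) (-Complex.I) Complex.I θ φ :=
  aux_op hH (-1) (-Complex.I) Complex.I (by simp) (by simp) (ethbarH H) (aux_ethbarH_s4 hH) θ φ hs

lemma aux_ethbar2 (hH : ContDiffOn ℝ (⊤ : ℕ∞) H {v : Fin 3 → ℝ | v ≠ 0}) (θ φ : ℝ)
    (hs : Real.sin θ ≠ 0) : ethbar2H H θ φ = (Real.sqrt 2 : ℂ)⁻¹ * (Real.sqrt 2 : ℂ)⁻¹ *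
      auxS H 1 (-Complex.I) (-Complex.I) θ φ := by
  rw [← aux_op hH 1 (-Complex.I) (-Complex.I) (by simp) (by simp) (ethbarH H)
    (aux_ethbarH_s4 hH) θ φ hs]
  simp only [ethbar2H, ethbar, neg_neg]
  ring

lemma aux_exists (hH : ContDiffOn ℝ (⊤ : ℕ∞) H {v : Fin 3 → ℝ | v ≠ 0}) :
    ∃ F G : ℝ → ℝ → ℝ, Continuous (fun p : ℝ × ℝ => F p.1 p.2) ∧
      Continuous (fun p : ℝ × ℝ => G p.1 p.2) ∧
      (∀ θ φ, (HC H θ φ + ethethbarH H θ φ).re * Real.sin θ = F φ θ) ∧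
      (∀ s θ φ : ℝ, (((HC H θ φ + (s : ℂ) + ethethbarH H θ φ) ^ 2 -
        eth2H H θ φ * ethbar2H H θ φ).re) * Real.sin θ
        = G φ θ + 2 * s * F φ θ + s ^ 2 * Real.sin θ) := by
  have c0 := (aux_contH hH).comp continuous_swap
  have c1 := ((aux_contS hH (-1) (-Complex.I) Complex.I).comp continuous_swap).const_mul
    ((Real.sqrt 2 : ℂ)⁻¹ * (Real.sqrt 2 : ℂ)⁻¹)
  have c2 := ((aux_contS hH 1 Complex.I Complex.I).comp continuous_swap).const_mul
    ((Real.sqrt 2 : ℂ)⁻¹ * (Real.sqrt 2 : ℂ)⁻¹)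
  have c3 := ((aux_contS hH 1 (-Complex.I) (-Complex.I)).comp continuous_swap).const_mul
    ((Real.sqrt 2 : ℂ)⁻¹ * (Real.sqrt 2 : ℂ)⁻¹)
  have cs : Continuous (fun p : ℝ × ℝ => Real.sin p.2) := by fun_prop
  refine ⟨fun φ θ => (HC H θ φ + (Real.sqrt 2 : ℂ)⁻¹ * (Real.sqrt 2 : ℂ)⁻¹ *
      auxS H (-1) (-Complex.I) Complex.I θ φ).re * Real.sin θ,
    fun φ θ => ((HC H θ φ + (Real.sqrt 2 : ℂ)⁻¹ * (Real.sqrt 2 : ℂ)⁻¹ *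
      auxS H (-1) (-Complex.I) Complex.I θ φ) ^ 2 -
      ((Real.sqrt 2 : ℂ)⁻¹ * (Real.sqrt 2 : ℂ)⁻¹ * auxS H 1 Complex.I Complex.I θ φ) *
      ((Real.sqrt 2 : ℂ)⁻¹ * (Real.sqrt 2 : ℂ)⁻¹ *
        auxS H 1 (-Complex.I) (-Complex.I) θ φ)).re * Real.sin θ,
    (Complex.continuous_re.comp (c0.add c1)).mul cs,
    (Complex.continuous_re.comp (((c0.add c1).pow 2).sub (c2.mul c3))).mul cs, ?_, ?_⟩
  · intro θ φ
    by_cases hs : Real.sin θ = 0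
    · simp [hs]
    · rw [aux_etheth hH θ φ hs]
  · intro s θ φ
    by_cases hs : Real.sin θ = 0
    · simp [hs]
    · rw [aux_etheth hH θ φ hs, aux_eth2 hH θ φ hs, aux_ethbar2 hH θ φ hs]
      simp only [pow_two, Complex.add_re, Complex.sub_re, Complex.mul_re, Complex.add_im,
        Complex.ofReal_re, Complex.ofReal_im]
      ring

end SteinerAux

/-- Steiner's theorem: `A(s) = A + 2sM + 4πs²` and
`V(s) = V₀ + ∫₀^s A(u) du = V₀ + sA + s²M + (4/3)πs³`. -/
theorem stmt4 (H : (Fin 3 → ℝ) → ℝ)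
    (hH : ContDiffOn ℝ (⊤ : ℕ∞) H {v : Fin 3 → ℝ | v ≠ 0})
    (hhom : ∀ v : Fin 3 → ℝ, v ≠ 0 → ∀ t : ℝ, 0 < t → H (t • v) = H v) :
    (∀ s : ℝ, Asteiner H s = Asteiner H 0 + 2 * s * Msteiner H + 4 * Real.pi * s ^ 2) ∧
    (∀ V₀ : ℝ, ∀ s : ℝ, V₀ + (∫ u in (0:ℝ)..s, Asteiner H u) =
      V₀ + s * Asteiner H 0 + s ^ 2 * Msteiner H + (4 / 3) * Real.pi * s ^ 3) := by
  have key : ∀ s : ℝ, Asteiner H s =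
      Asteiner H 0 + 2 * s * Msteiner H + 4 * Real.pi * s ^ 2 := by
    obtain ⟨F, G, hF, hG, h1, h2⟩ := aux_exists hH
    have hA : ∀ s, Asteiner H s = (∫ φ in (0:ℝ)..(2 * Real.pi), ∫ θ in (0:ℝ)..Real.pi, G φ θ)
        + 2 * s * (∫ φ in (0:ℝ)..(2 * Real.pi), ∫ θ in (0:ℝ)..Real.pi, F φ θ)
        + 4 * Real.pi * s ^ 2 := by
      intro s
      have hFi : ∀ φ, Continuous (F φ) := fun φ => hF.comp (by fun_prop : Continuous fun θ : ℝ => (φ, θ))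
      have hGi : ∀ φ, Continuous (G φ) := fun φ => hG.comp (by fun_prop : Continuous fun θ : ℝ => (φ, θ))
      have hFo : Continuous (fun φ => ∫ θ in (0:ℝ)..Real.pi, F φ θ) :=
        intervalIntegral.continuous_parametric_intervalIntegral_of_continuous' hF _ _
      have hGo : Continuous (fun φ => ∫ θ in (0:ℝ)..Real.pi, G φ θ) :=
        intervalIntegral.continuous_parametric_intervalIntegral_of_continuous' hG _ _
      have inner : ∀ φ, (∫ θ in (0:ℝ)..Real.pi, (G φ θ + 2 * s * F φ θ + s ^ 2 * Real.sin θ))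
          = (∫ θ in (0:ℝ)..Real.pi, G φ θ) + 2 * s * (∫ θ in (0:ℝ)..Real.pi, F φ θ)
            + s ^ 2 * 2 := by
        intro φ
        rw [intervalIntegral.integral_add, intervalIntegral.integral_add,
          intervalIntegral.integral_const_mul, intervalIntegral.integral_const_mul, integral_sin]
        · norm_num
        · exact (hGi φ).intervalIntegrable _ _
        · exact (continuous_const.mul (hFi φ)).intervalIntegrable _ _
        · exact ((hGi φ).add (continuous_const.mul (hFi φ))).intervalIntegrable _ _
        · exact (continuous_const.mul Real.continuous_sin).intervalIntegrable _ _
      unfold Asteiner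
      simp only [h2, inner]
      rw [intervalIntegral.integral_add, intervalIntegral.integral_add,
        intervalIntegral.integral_const_mul, intervalIntegral.integral_const]
      · simp only [smul_eq_mul]; ring
      · exact hGo.intervalIntegrable _ _
      · exact (continuous_const.mul hFo).intervalIntegrable _ _
      · exact (hGo.add (continuous_const.mul hFo)).intervalIntegrable _ _
      · exact continuous_const.intervalIntegrable _ _
    have hM : Msteiner H = ∫ φ in (0:ℝ)..(2 * Real.pi), ∫ θ in (0:ℝ)..Real.pi, F φ θ := by
      unfold Msteiner
      simp only [h1]
    rw [hM]
    intro s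
    rw [hA s, hA 0]
    ring
  refine ⟨key, ?_⟩
  intro V₀ s
  have e : (∫ u in (0:ℝ)..s, Asteiner H u) = ∫ u in (0:ℝ)..s,
      (Asteiner H 0 + 2 * Msteiner H * u + 4 * Real.pi * u ^ 2) := by
    congr 1
    funext u
    rw [key u]
    ring
  rw [e, intervalIntegral.integral_add, intervalIntegral.integral_add,
    intervalIntegral.integral_const_mul, intervalIntegral.integral_const_mul,
    intervalIntegral.integral_const, integral_id, integral_pow]
  · simp only [smul_eq_mul]; push_cast; ring
  all_goals exact Continuous.intervalIntegrable (by fun_prop) _ _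
end
end

section
/- (Brunn–Minkowski Theorem for parallel bodies.) Let K ⊆ ℝ³ be a nonempty compact convex set and let B be the closed unit ball in ℝ³. Then the function R : [0,∞) → ℝ defined by R(s) := (volume(K + s•B))^{1/3}, where K + s•B is the Minkowski sum {k + s·b : k ∈ K, b ∈ B} and volume is Lebesgue measure, is concave on [0,∞). -/
noncomputable section

open MeasureTheory Pointwise

open scoped ENNReal

lemma bm1_compact {A B C : Set ℝ} (hA : IsCompact A) (hB : IsCompact B) (nA : A.Nonempty)
    (nB : B.Nonempty) (h : ∀ a ∈ A, ∀ b ∈ B, a + b ∈ C) :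
    volume A + volume B ≤ volume C := by
  obtain ⟨a1, ha1, ha1'⟩ := hA.exists_isGreatest nA
  obtain ⟨b0, hb0, hb0'⟩ := hB.exists_isLeast nB
  have hU : volume ((fun x => x + b0) '' A) = volume A := by simp
  have hV : volume ((fun x => a1 + x) '' B) = volume B := by simp
  have mV : MeasurableSet ((fun x => a1 + x) '' B) :=
    (hB.image (by fun_prop)).measurableSet
  rw [← hU, ← hV, ← measure_union₀ mV.nullMeasurableSet]
  · apply measure_mono
    rintro _ (⟨x, hx, rfl⟩ | ⟨x, hx, rfl⟩)
    · exact h _ hx _ hb0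
    · exact h _ ha1 _ hx
  · refine measure_mono_null (t := {a1 + b0}) ?_ (by simp)
    rintro z ⟨⟨x, hx, rfl⟩, ⟨y, hy, hxy⟩⟩
    have := ha1' hx
    have := hb0' hy
    simp only at hxy
    simp only [Set.mem_singleton_iff]
    linarith

lemma bm1 {A B C : Set ℝ} (hA : MeasurableSet A) (hB : MeasurableSet B) (nA : A.Nonempty)
    (nB : B.Nonempty) (h : ∀ a ∈ A, ∀ b ∈ B, a + b ∈ C) :
    volume A + volume B ≤ volume C := by
  obtain ⟨a, ha⟩ := nA
  obtain ⟨b, hb⟩ := nB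
  have key : ∀ r < volume A, ∀ s < volume B, r + s ≤ volume C := by
    intro r hr s hs
    obtain ⟨K, hK, cK, rK⟩ := hA.exists_lt_isCompact hr
    obtain ⟨L, hL, cL, sL⟩ := hB.exists_lt_isCompact hs
    calc r + s ≤ volume (insert a K) + volume (insert b L) :=
          add_le_add (rK.le.trans (measure_mono (Set.subset_insert _ _)))
            (sL.le.trans (measure_mono (Set.subset_insert _ _)))
      _ ≤ volume C := bm1_compact (cK.insert a) (cL.insert b) (Set.insert_nonempty _ _)
          (Set.insert_nonempty _ _) (fun x hx y hy =>
            h x (Set.insert_subset ha hK hx) y (Set.insert_subset hb hL hy))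
  rcases eq_or_ne (volume A) 0 with h0 | h0
  · rw [h0, zero_add]
    calc volume B = volume ((fun x => a + x) '' B) := by simp
      _ ≤ _ := by
        apply measure_mono
        rintro _ ⟨x, hx, rfl⟩
        exact h _ ha _ hx
  rcases eq_or_ne (volume B) 0 with h1 | h1
  · rw [h1, add_zero]
    calc volume A = volume ((fun x => x + b) '' A) := by simp
      _ ≤ _ := by
        apply measure_mono
        rintro _ ⟨x, hx, rfl⟩
        exact h _ hx _ hb
  have e1 : ∀ x : ℝ≥0∞, x ≠ 0 → (⨆ r : {r // r < x}, (r : ℝ≥0∞)) = x := by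
    intro x hx
    apply le_antisymm (iSup_le fun r => r.2.le)
    refine le_of_forall_lt fun c hc => ?_
    obtain ⟨d, hd, hd'⟩ := exists_between hc
    exact hd.trans_le (le_iSup (fun r : {r // r < x} => (r : ℝ≥0∞)) ⟨d, hd'⟩)
  rw [← e1 _ h0, ← e1 _ h1]
  have : Nonempty {r // r < volume A} := ⟨⟨0, pos_iff_ne_zero.2 h0⟩⟩
  have : Nonempty {r // r < volume B} := ⟨⟨0, pos_iff_ne_zero.2 h1⟩⟩
  exact ENNReal.iSup_add_iSup_le fun r s => key r r.2 s s.2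

lemma bm1w {t : ℝ} (ht0 : 0 < t) (ht1 : t < 1) {A B C : Set ℝ} (hA : MeasurableSet A)
    (hB : MeasurableSet B) (nA : A.Nonempty)
    (nB : B.Nonempty) (h : ∀ a ∈ A, ∀ b ∈ B, (1 - t) * a + t * b ∈ C) :
    ENNReal.ofReal (1 - t) * volume A + ENNReal.ofReal t * volume B ≤ volume C := by
  have e1 : volume ((1 - t) • A) = ENNReal.ofReal (1 - t) * volume A := by
    rw [Measure.addHaar_smul]; simp [abs_of_pos (sub_pos.2 ht1)]
  have e2 : volume (t • B) = ENNReal.ofReal t * volume B := by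
    rw [Measure.addHaar_smul]; simp [abs_of_pos ht0]
  rw [← e1, ← e2]
  refine bm1 (hA.const_smul₀ _) (hB.const_smul₀ _) nA.smul_set nB.smul_set ?_
  rintro _ ⟨x, hx, rfl⟩ _ ⟨y, hy, rfl⟩
  exact h x hx y hy

lemma layer {f : ℝ → ℝ≥0∞} (hf : Measurable f) (h1 : ∀ x, f x ≤ 1) :
    ∫⁻ x, f x = ∫⁻ s in Set.Ioi (0 : ℝ), volume {x | ENNReal.ofReal s < f x} := by
  have hfin : ∀ x, f x ≠ ∞ := fun x => ne_top_of_le_ne_top ENNReal.one_ne_top (h1 x)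
  have := lintegral_eq_lintegral_meas_lt (volume : Measure ℝ) (f := fun x => (f x).toReal)
    (Filter.Eventually.of_forall fun x => ENNReal.toReal_nonneg) hf.ennreal_toReal.aemeasurable
  simp only [ENNReal.ofReal_toReal (hfin _)] at this
  rw [this]
  refine setLIntegral_congr_fun measurableSet_Ioi fun s hs => ?_
  simp only [ENNReal.ofReal_lt_iff_lt_toReal (le_of_lt hs) (hfin _)]

lemma amgm {t : ℝ} (ht0 : 0 < t) (ht1 : t < 1) (a b : ℝ≥0∞) :
    a ^ (1 - t) * b ^ t ≤ ENNReal.ofReal (1 - t) * a + ENNReal.ofReal t * b := by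
  have h1 : 0 < 1 - t := sub_pos.2 ht1
  have hpq : ((1 - t)⁻¹).HolderConjugate (t⁻¹) := by
    rw [Real.holderConjugate_iff]
    refine ⟨(one_lt_inv₀ h1).2 (by linarith), by simp⟩
  have := ENNReal.young_inequality (a ^ (1 - t)) (b ^ t) hpq
  rw [← ENNReal.rpow_mul, ← ENNReal.rpow_mul, mul_inv_cancel₀ h1.ne', mul_inv_cancel₀ ht0.ne',
    ENNReal.rpow_one, ENNReal.rpow_one, ENNReal.ofReal_inv_of_pos h1,
    ENNReal.ofReal_inv_of_pos ht0, div_eq_mul_inv, div_eq_mul_inv, inv_inv, inv_inv] at this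
  rwa [mul_comm _ a, mul_comm _ b]

lemma pl1_norm {t : ℝ} (ht0 : 0 < t) (ht1 : t < 1) {f g h : ℝ → ℝ≥0∞} (hf : Measurable f)
    (hg : Measurable g) (hh : Measurable h) (sf : ⨆ x, f x = 1) (sg : ⨆ x, g x = 1)
    (H : ∀ x y, f x ^ (1 - t) * g y ^ t ≤ h ((1 - t) * x + t * y)) :
    (∫⁻ x, f x) ^ (1 - t) * (∫⁻ x, g x) ^ t ≤ ∫⁻ x, h x := by
  have h1 : 0 < 1 - t := sub_pos.2 ht1
  have f1 : ∀ x, f x ≤ 1 := fun x => sf ▸ le_iSup f x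
  have g1 : ∀ x, g x ≤ 1 := fun x => sg ▸ le_iSup g x
  have hmin : ∫⁻ x, min (h x) 1 ≤ ∫⁻ x, h x := lintegral_mono fun x => min_le_left _ _
  refine (amgm ht0 ht1 _ _).trans (le_trans ?_ hmin)
  rw [layer hf f1, layer hg g1, layer (hh.min measurable_const) (fun x => min_le_right _ _)]
  have anti : ∀ u : ℝ → ℝ≥0∞, Measurable fun s : ℝ => volume {x | ENNReal.ofReal s < u x} := by
    intro u
    apply Antitone.measurable
    intro s s' hs
    apply measure_mono
    intro x hx
    exact lt_of_le_of_lt (ENNReal.ofReal_le_ofReal hs) hx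
  rw [← lintegral_const_mul _ (anti f), ← lintegral_const_mul _ (anti g),
    ← lintegral_add_left ((anti f).const_mul _)]
  refine setLIntegral_mono' measurableSet_Ioi fun s hs => ?_
  by_cases hs1 : s < 1
  · have hs1' : ENNReal.ofReal s < 1 := by
      rw [← ENNReal.ofReal_one]; exact (ENNReal.ofReal_lt_ofReal_iff one_pos).2 hs1
    refine bm1w ht0 ht1 (measurableSet_lt measurable_const hf)
      (measurableSet_lt measurable_const hg) ?_ ?_ ?_
    · exact lt_iSup_iff.1 (sf ▸ hs1')
    · exact lt_iSup_iff.1 (sg ▸ hs1')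
    · intro a ha b hb
      simp only [Set.mem_ofPred_eq] at ha hb ⊢
      refine lt_min (lt_of_lt_of_le ?_ (H a b)) hs1'
      calc ENNReal.ofReal s = ENNReal.ofReal s ^ (1 - t) * ENNReal.ofReal s ^ t := by
            rw [← ENNReal.rpow_add _ _ (by simpa using hs) ENNReal.ofReal_ne_top]; simp
        _ < _ := ENNReal.mul_lt_mul (ENNReal.rpow_lt_rpow ha h1) (ENNReal.rpow_lt_rpow hb ht0)
  · have hs1' : 1 ≤ ENNReal.ofReal s := by
      rw [← ENNReal.ofReal_one]; exact ENNReal.ofReal_le_ofReal (not_lt.1 hs1)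
    have : ∀ u : ℝ → ℝ≥0∞, (∀ x, u x ≤ 1) → volume {x | ENNReal.ofReal s < u x} = 0 := by
      intro u hu
      have : {x | ENNReal.ofReal s < u x} = ∅ := by
        ext x; simpa using (hu x).trans hs1'
      rw [this]; simp
    rw [this f f1, this g g1]; simp

lemma pl1_bdd {t : ℝ} (ht0 : 0 < t) (ht1 : t < 1) {f g h : ℝ → ℝ≥0∞} (hf : Measurable f)
    (hg : Measurable g) (hh : Measurable h) (sf : ⨆ x, f x ≠ ∞) (sg : ⨆ x, g x ≠ ∞)
    (H : ∀ x y, f x ^ (1 - t) * g y ^ t ≤ h ((1 - t) * x + t * y)) :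
    (∫⁻ x, f x) ^ (1 - t) * (∫⁻ x, g x) ^ t ≤ ∫⁻ x, h x := by
  have h1 : 0 < 1 - t := sub_pos.2 ht1
  rcases eq_or_ne (⨆ x, f x) 0 with f0 | f0
  · have : ∀ x, f x = 0 := by simpa using f0
    simp [this, h1]
  rcases eq_or_ne (⨆ x, g x) 0 with g0 | g0
  · have : ∀ x, g x = 0 := by simpa using g0
    simp [this, ht0]
  set M := ⨆ x, f x
  set N := ⨆ x, g x
  have key := pl1_norm ht0 ht1 (f := fun x => M⁻¹ * f x) (g := fun x => N⁻¹ * g x)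
    (h := fun x => ((M⁻¹) ^ (1 - t) * (N⁻¹) ^ t) * h x) (hf.const_mul _) (hg.const_mul _)
    (hh.const_mul _) (by rw [← ENNReal.mul_iSup]; exact ENNReal.inv_mul_cancel f0 sf)
    (by rw [← ENNReal.mul_iSup]; exact ENNReal.inv_mul_cancel g0 sg)
    (by
      intro x y
      rw [ENNReal.mul_rpow_of_nonneg _ _ h1.le, ENNReal.mul_rpow_of_nonneg _ _ ht0.le,
        mul_mul_mul_comm]
      gcongr
      exact H x y)
  rw [lintegral_const_mul _ hf, lintegral_const_mul _ hg, lintegral_const_mul _ hh,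
    ENNReal.mul_rpow_of_nonneg _ _ h1.le, ENNReal.mul_rpow_of_nonneg _ _ ht0.le,
    mul_mul_mul_comm] at key
  refine (ENNReal.mul_le_mul_iff_right ?_ ?_).1 key
  · refine mul_ne_zero ?_ ?_ <;> simp [ENNReal.rpow_eq_zero_iff, *]
  · refine ENNReal.mul_ne_top ?_ ?_ <;> simp [ENNReal.rpow_eq_top_iff, *, h1.not_gt, ht0.not_gt]

/-- Prékopa–Leindler property. -/
def PL (E : Type) [MeasureSpace E] [AddCommGroup E] [Module ℝ E] (t : ℝ) : Prop :=
  ∀ f g h : E → ℝ≥0∞, Measurable f → Measurable g → Measurable h →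
    (∀ x y, f x ^ (1 - t) * g y ^ t ≤ h ((1 - t) • x + t • y)) →
    (∫⁻ x, f x) ^ (1 - t) * (∫⁻ x, g x) ^ t ≤ ∫⁻ x, h x

lemma trunc {f : ℝ → ℝ≥0∞} (hf : Measurable f) {t : ℝ} (ht : 0 < t) :
    (∫⁻ x, f x) ^ t = ⨆ n : ℕ, (∫⁻ x, min (f x) n) ^ t := by
  have : ∀ x, f x = ⨆ n : ℕ, min (f x) n := by
    intro x
    rw [← inf_iSup_eq (f x) (fun n : ℕ => (n : ℝ≥0∞)), ENNReal.iSup_natCast, inf_top_eq]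
  have e : ∫⁻ x, f x = ⨆ n : ℕ, ∫⁻ x, min (f x) n := by
    rw [← lintegral_iSup (fun n => hf.min measurable_const)]
    · exact lintegral_congr this
    · intro m n hmn x
      exact min_le_min_left _ (by exact_mod_cast hmn)
  rw [e]
  exact (ENNReal.orderIsoRpow t ht).map_iSup _

lemma pl_real {t : ℝ} (ht0 : 0 < t) (ht1 : t < 1) : PL ℝ t := by
  intro f g h hf hg hh H
  have h1 : 0 < 1 - t := sub_pos.2 ht1
  rw [trunc hf h1, trunc hg ht0, ENNReal.iSup_mul]
  refine iSup_le fun n => ?_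
  rw [ENNReal.mul_iSup]
  refine iSup_le fun m => ?_
  refine pl1_bdd ht0 ht1 (hf.min measurable_const) (hg.min measurable_const) hh ?_ ?_ ?_
  · exact ne_top_of_le_ne_top (ENNReal.natCast_ne_top n) (iSup_le fun x => min_le_right _ _)
  · exact ne_top_of_le_ne_top (ENNReal.natCast_ne_top m) (iSup_le fun x => min_le_right _ _)
  · intro x y
    refine le_trans ?_ (H x y)
    gcongr
    · exact min_le_left _ _
    · exact min_le_left _ _

lemma pl_prod {E F : Type} [MeasureSpace E] [AddCommGroup E] [Module ℝ E]
    [MeasureSpace F] [AddCommGroup F] [Module ℝ F] [SFinite (volume : Measure F)]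
    [SFinite (volume : Measure E)] {t : ℝ}
    (hE : PL E t) (hF : PL F t) : PL (E × F) t := by
  intro f g h hf hg hh H
  rw [Measure.volume_eq_prod, lintegral_prod _ hf.aemeasurable, lintegral_prod _ hg.aemeasurable,
    lintegral_prod _ hh.aemeasurable]
  refine hE _ _ _ hf.lintegral_prod_right' hg.lintegral_prod_right' hh.lintegral_prod_right' ?_
  intro x y
  refine hF _ _ _ (hf.comp measurable_prodMk_left) (hg.comp measurable_prodMk_left)
    (hh.comp measurable_prodMk_left) ?_
  intro u v
  exact H (x, u) (y, v)

lemma pl_transfer {E F : Type} [MeasureSpace E] [AddCommGroup E] [Module ℝ E]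
    [MeasureSpace F] [AddCommGroup F] [Module ℝ F] {t : ℝ} (e : E ≃ᵐ F)
    (he : MeasurePreserving e) (hl : ∀ x y, e ((1 - t) • x + t • y) = (1 - t) • e x + t • e y)
    (hE : PL E t) : PL F t := by
  intro f g h hf hg hh H
  rw [← he.lintegral_comp hf, ← he.lintegral_comp hg, ← he.lintegral_comp hh]
  refine hE _ _ _ (hf.comp e.measurable) (hg.comp e.measurable) (hh.comp e.measurable) ?_
  intro x y
  simp only [hl]
  exact H _ _

lemma pl_pi {t : ℝ} (ht0 : 0 < t) (ht1 : t < 1) (n : ℕ) : PL (Fin n → ℝ) t := by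
  induction n with
  | zero =>
    intro f g h hf hg hh H
    have hv : (volume : Measure (Fin 0 → ℝ)) = Measure.dirac 0 := by
      rw [volume_pi, Measure.pi_of_empty _ 0]
    rw [hv, lintegral_dirac' _ hf, lintegral_dirac' _ hg, lintegral_dirac' _ hh]
    simpa using H 0 0
  | succ n ih =>
    refine pl_transfer (MeasurableEquiv.piFinSuccAbove (fun _ : Fin (n + 1) => ℝ) 0).symm
      (volume_preserving_piFinSuccAbove (fun _ : Fin (n + 1) => ℝ) 0).symm ?_
      (pl_prod (pl_real ht0 ht1) ih)
    rintro ⟨x, u⟩ ⟨y, v⟩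
    rw [MeasurableEquiv.symm_apply_eq]
    ext i
    · simp [MeasurableEquiv.piFinSuccAbove]
    · simp [MeasurableEquiv.piFinSuccAbove, Fin.tail]

lemma pl_euc {t : ℝ} (ht0 : 0 < t) (ht1 : t < 1) (n : ℕ) : PL (EuclideanSpace ℝ (Fin n)) t :=
  pl_transfer (MeasurableEquiv.toLp 2 (Fin n → ℝ)) (PiLp.volume_preserving_toLp (Fin n))
    (fun _ _ => rfl) (pl_pi ht0 ht1 n)

abbrev V3 := EuclideanSpace ℝ (Fin 3)

lemma vol_smul (r : ℝ) (hr : 0 ≤ r) (X : Set V3) :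
    (volume (r • X)).toReal = r ^ 3 * (volume X).toReal := by
  rw [Measure.addHaar_smul]
  simp [abs_of_nonneg hr, pow_nonneg hr 3]

lemma bm_mul {t : ℝ} (ht0 : 0 < t) (ht1 : t < 1) {X Y C : Set V3} (hX : MeasurableSet X)
    (hY : MeasurableSet Y) (hC : MeasurableSet C)
    (H : ∀ x ∈ X, ∀ y ∈ Y, (1 - t) • x + t • y ∈ C) :
    (volume X) ^ (1 - t) * (volume Y) ^ t ≤ volume C := by
  have h1 : 0 < 1 - t := sub_pos.2 ht1
  have := pl_euc ht0 ht1 3 (X.indicator 1) (Y.indicator 1) (C.indicator 1)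
    (measurable_one.indicator hX) (measurable_one.indicator hY) (measurable_one.indicator hC) ?_
  · rwa [lintegral_indicator_one hX, lintegral_indicator_one hY, lintegral_indicator_one hC] at this
  · intro x y
    by_cases hx : x ∈ X
    · by_cases hy : y ∈ Y
      · simp [hx, hy, H x hx y hy]
      · simp [hy, ht0]
    · simp [hx, h1]

lemma cube_root {v : ℝ} (hv : 0 ≤ v) : (v ^ ((1 : ℝ) / 3)) ^ 3 = v := by
  rw [← Real.rpow_natCast, ← Real.rpow_mul hv]; norm_num

lemma bm3 {t : ℝ} (ht0 : 0 < t) (ht1 : t < 1) {X Y C : Set V3} (hX : IsCompact X)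
    (hY : IsCompact Y) (hC : IsCompact C) (nX : X.Nonempty) (nY : Y.Nonempty)
    (H : ∀ x ∈ X, ∀ y ∈ Y, (1 - t) • x + t • y ∈ C) :
    (1 - t) * (volume X).toReal ^ ((1 : ℝ) / 3) + t * (volume Y).toReal ^ ((1 : ℝ) / 3)
      ≤ (volume C).toReal ^ ((1 : ℝ) / 3) := by
  have h1 : 0 < 1 - t := sub_pos.2 ht1
  have vC : volume C ≠ ∞ := hC.measure_lt_top.ne
  have vX : volume X ≠ ∞ := hX.measure_lt_top.ne
  have vY : volume Y ≠ ∞ := hY.measure_lt_top.ne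
  set a := (volume X).toReal ^ ((1 : ℝ) / 3) with ha
  set b := (volume Y).toReal ^ ((1 : ℝ) / 3) with hb
  have a3 : a ^ 3 = (volume X).toReal := cube_root ENNReal.toReal_nonneg
  have b3 : b ^ 3 = (volume Y).toReal := cube_root ENNReal.toReal_nonneg
  have c3 := cube_root (ENNReal.toReal_nonneg (a := volume C))
  have a0 : 0 ≤ a := by positivity
  have b0 : 0 ≤ b := by positivity
  refine le_of_pow_le_pow_left₀ (n := 3) (by norm_num) (by positivity) ?_
  rw [c3]
  rcases a0.eq_or_lt with az | ap
  · obtain ⟨x, hx⟩ := nX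
    rw [← az, mul_zero, zero_add, mul_pow, b3, ← vol_smul t ht0.le]
    refine ENNReal.toReal_mono vC ?_
    rw [← measure_preimage_add volume (-((1 - t) • x)) (t • Y)]
    apply measure_mono
    rintro z ⟨y, hy, hz⟩
    have : z = (1 - t) • x + t • y := by
      simp only at hz
      rw [hz]; abel
    rw [this]; exact H _ hx _ hy
  rcases b0.eq_or_lt with bz | bp
  · obtain ⟨y, hy⟩ := nY
    rw [← bz, mul_zero, add_zero, mul_pow, a3, ← vol_smul (1 - t) h1.le]
    refine ENNReal.toReal_mono vC ?_
    rw [← measure_preimage_add volume (-(t • y)) ((1 - t) • X)]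
    apply measure_mono
    rintro z ⟨x, hx, hz⟩
    have : z = (1 - t) • x + t • y := by
      simp only at hz
      rw [hz]; abel
    rw [this]; exact H _ hx _ hy
  set m := (1 - t) * a + t * b with hm
  have hA : 0 < (1 - t) * a := by positivity
  have hB : 0 < t * b := by positivity
  have mp : 0 < m := by positivity
  have one : ∀ (r : ℝ) (Z : Set V3), 0 < r → volume Z ≠ ∞ → r ^ 3 = (volume Z).toReal →
      volume (r⁻¹ • Z) = 1 := by
    intro r Z hr hZ h3
    have := vol_smul r⁻¹ (by positivity) Z
    rw [← h3, ← mul_pow, inv_mul_cancel₀ hr.ne', one_pow] at this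
    exact (ENNReal.toReal_eq_one_iff _).1 this
  have key := bm_mul (t := t * b / m) (by positivity) ((div_lt_one mp).2 (by linarith))
    (X := a⁻¹ • X) (Y := b⁻¹ • Y) (C := m⁻¹ • C) (hX.measurableSet.const_smul₀ _)
    (hY.measurableSet.const_smul₀ _) (hC.measurableSet.const_smul₀ _) ?_
  · rw [one a X ap vX a3, one b Y bp vY b3, ENNReal.one_rpow, ENNReal.one_rpow, one_mul] at key
    have k2 : 1 ≤ (volume (m⁻¹ • C)).toReal := by
      rw [← ENNReal.toReal_one]
      exact ENNReal.toReal_mono (hC.smul _).measure_lt_top.ne key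
    rw [vol_smul _ (by positivity), inv_pow, ← div_eq_inv_mul, one_le_div (by positivity)] at k2
    exact k2
  · rintro _ ⟨x, hx, rfl⟩ _ ⟨y, hy, rfl⟩
    refine ⟨_, H x hx y hy, ?_⟩
    simp only [smul_add, smul_smul]
    congr 2
    · field_simp
      rw [hm]; ring
    · field_simp

/-- Brunn–Minkowski for parallel bodies: for a nonempty compact convex `K ⊆ ℝ³`, the function
`s ↦ (volume (K + s•B))^{1/3}` is concave on `[0,∞)`, where `B` is the closed unit ball. -/
theorem stmt5 (K : Set (EuclideanSpace ℝ (Fin 3))) (hne : K.Nonempty)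
    (hcpt : IsCompact K) (hconv : Convex ℝ K) :
    ConcaveOn ℝ (Set.Ici 0) (fun s : ℝ =>
      (volume (K + s • Metric.closedBall (0 : EuclideanSpace ℝ (Fin 3)) 1)).toReal
        ^ ((1 : ℝ) / 3)) := by
  have cB : IsCompact (Metric.closedBall (0 : V3) 1) := isCompact_closedBall _ _
  have cvB : Convex ℝ (Metric.closedBall (0 : V3) 1) := convex_closedBall _ _
  have nB : (Metric.closedBall (0 : V3) 1).Nonempty := ⟨0, by simp⟩
  rw [concaveOn_iff_forall_pos]
  refine ⟨convex_Ici 0, ?_⟩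
  intro s hs r hr p t hp ht hpt
  obtain rfl : p = 1 - t := by linarith
  simp only [smul_eq_mul]
  refine bm3 ht (by linarith) (hcpt.add (cB.smul _)) (hcpt.add (cB.smul _))
    (hcpt.add (cB.smul _)) (hne.add nB.smul_set) (hne.add nB.smul_set) ?_
  rintro _ ⟨k, hk, _, ⟨u, hu, rfl⟩, rfl⟩ _ ⟨l, hl, _, ⟨v, hv, rfl⟩, rfl⟩
  have hs' : 0 ≤ (1 - t) * s := mul_nonneg hp.le hs
  have hr' : 0 ≤ t * r := mul_nonneg ht.le hr
  rw [cvB.add_smul hs' hr']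
  refine ⟨(1 - t) • k + t • l, hconv hk hl hp.le ht.le hpt, ((1 - t) * s) • u + (t * r) • v,
    ⟨_, ⟨u, hu, rfl⟩, _, ⟨v, hv, rfl⟩, rfl⟩, ?_⟩
  simp only [smul_add, smul_smul]
  abel
end
end

section
/- Let A, M, V be positive real numbers such that for all s ≥ 0: (6MV − 2A²) + 2s(12πV − AM) + 2s²(4πA − M²) ≤ 0. Then Minkowski's inequality M² ≥ 4πA holds, and the isoperimetric inequality 36πV² ≤ A³ holds. -/
noncomputable section

/-- From the differentiated Brunn–Minkowski inequality along parallel bodies one deduces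
Minkowski's inequality `M² ≥ 4πA` and the isoperimetric inequality `36πV² ≤ A³`. -/
theorem stmt7 (A M V : ℝ) (hA : 0 < A) (hM : 0 < M) (hV : 0 < V)
    (h : ∀ s : ℝ, 0 ≤ s →
      (6 * M * V - 2 * A ^ 2) + 2 * s * (12 * Real.pi * V - A * M) +
        2 * s ^ 2 * (4 * Real.pi * A - M ^ 2) ≤ 0) :
    M ^ 2 ≥ 4 * Real.pi * A ∧ 36 * Real.pi * V ^ 2 ≤ A ^ 3 := by
  have h1 : M ^ 2 ≥ 4 * Real.pi * A := by
    by_contra hc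
    have hc' : 0 < 4 * Real.pi * A - M ^ 2 := by linarith [not_le.mp hc]
    generalize 4 * Real.pi * A - M ^ 2 = c at h hc'
    generalize 6 * M * V - 2 * A ^ 2 = a at h
    generalize 12 * Real.pi * V - A * M = b at h
    obtain ⟨s, hs⟩ : ∃ s, s = 1 + (|a| + 2 * |b|) / c := ⟨_, rfl⟩
    have hq : 0 ≤ (|a| + 2 * |b|) / c := by positivity
    have hs1 : 1 ≤ s := by linarith
    have hsc : s * c = c + (|a| + 2 * |b|) := by
      rw [hs]; field_simp
    have h2 := h s (by linarith)
    have e : 2 * s ^ 2 * c = 2 * s * (c + (|a| + 2 * |b|)) := by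
      rw [← hsc]; ring
    rw [e] at h2
    have k1 : 0 ≤ s * (|b| + b) := mul_nonneg (by linarith) (by linarith [neg_abs_le b])
    have k2 : 0 ≤ (s - 1) * |a| := mul_nonneg (by linarith) (abs_nonneg a)
    have k3 : 0 < s * c := by positivity
    have k4 : 0 ≤ s * |b| := by positivity
    nlinarith [neg_abs_le a, abs_nonneg a]
  refine ⟨h1, ?_⟩
  have h0 := h 0 le_rfl
  have h3 : 3 * (M * V) ≤ A ^ 2 := by linarith
  have h4 : (3 * (M * V)) ^ 2 ≤ (A ^ 2) ^ 2 := pow_le_pow_left₀ (by positivity) h3 2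
  have h5 : 4 * Real.pi * A * V ^ 2 ≤ M ^ 2 * V ^ 2 :=
    mul_le_mul_of_nonneg_right h1 (by positivity)
  refine le_of_mul_le_mul_left ?_ hA
  linarith
end
end

section
/- Fix θ ∈ (0,π) and φ, and let V : ℝ³∖{0} → ℝ be smooth and homogeneous of degree 0 with V(θ,φ) := V(ℓ(θ,φ)). Then the set of real vectors x ∈ ℝ⁴ satisfying η(x, ℓᵃ) = V(θ,φ) and η(x, mᵃ) = (ðV)(θ,φ) (the second equation using the complex-bilinear extension of η; the conjugate equation η(x, m̄ᵃ) = ð̄V then holds automatically for real x) is exactly the line { V nᵃ − (ð̄V) mᵃ − (ðV) conj(mᵃ) + λ ℓᵃ : λ ∈ ℝ }. (This is the parametrisation of the null hypersurface determined by the cut function V at null infinity.) -/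
noncomputable section

/-- The Minkowski bilinear form on `ℝ⁴`: `η(x,y) = x⁰y⁰ − x¹y¹ − x²y² − x³y³`. -/
def etaR (x y : Fin 4 → ℝ) : ℝ := x 0 * y 0 - x 1 * y 1 - x 2 * y 2 - x 3 * y 3

/-- The complex-bilinear extension of the Minkowski form. -/
def etaC (x y : Fin 4 → ℂ) : ℂ := x 0 * y 0 - x 1 * y 1 - x 2 * y 2 - x 3 * y 3

/-- The null tetrad vector `ℓᵃ = (1, ℓ)`. -/
def tetL (θ φ : ℝ) : Fin 4 → ℝ := ![1, sphL θ φ 0, sphL θ φ 1, sphL θ φ 2]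

/-- The null tetrad vector `nᵃ = (1/2)(1, −ℓ)`. -/
def tetN (θ φ : ℝ) : Fin 4 → ℝ :=
  ![1 / 2, -(1 / 2) * sphL θ φ 0, -(1 / 2) * sphL θ φ 1, -(1 / 2) * sphL θ φ 2]

/-- The null tetrad vector `mᵃ = (0, m)`. -/
def tetM (θ φ : ℝ) : Fin 4 → ℂ := ![0, sphM θ φ 0, sphM θ φ 1, sphM θ φ 2]

/-- The cut function in spherical coordinates, complex-valued. -/
def VC (V : (Fin 3 → ℝ) → ℝ) (θ φ : ℝ) : ℂ := (V (sphL θ φ) : ℂ)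

theorem deriv_im_zero (f : ℝ → ℝ) (t : ℝ) : (deriv (fun t => (f t : ℂ)) t).im = 0 := by
  by_cases h : DifferentiableAt ℝ (fun t => (f t : ℂ)) t
  · have h1 := (Complex.imCLM.hasFDerivAt (x := (f t : ℂ))).comp_hasDerivAt t h.hasDerivAt
    have h2 : HasDerivAt (fun _ : ℝ => (0 : ℝ)) (Complex.imCLM (deriv (fun t => (f t : ℂ)) t)) t := by
      have h3 : (fun _ : ℝ => (0 : ℝ)) = Complex.imCLM ∘ fun t => (f t : ℂ) := by
        funext u; simp
      rw [h3]; exact h1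
    have := h2.unique (hasDerivAt_const t 0)
    simpa using this
  · rw [deriv_zero_of_not_differentiableAt h]; simp

theorem eth_form (V : (Fin 3 → ℝ) → ℝ) (θ φ : ℝ) : ∃ a b : ℝ,
    eth 0 (VC V) θ φ = ((Real.sqrt 2)⁻¹ : ℝ) * ((a : ℂ) + Complex.I * b) ∧
    ethbar 0 (VC V) θ φ = ((Real.sqrt 2)⁻¹ : ℝ) * ((a : ℂ) - Complex.I * b) := by
  have ha : ((deriv (fun t => VC V t φ) θ).re : ℂ) = deriv (fun t => VC V t φ) θ :=
    Complex.ext (by simp) (by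
      have := deriv_im_zero (fun t => V (sphL t φ)) θ
      simp only [VC, Complex.ofReal_im]; exact this.symm)
  have hb : ((deriv (fun t => VC V θ t) φ).re : ℂ) = deriv (fun t => VC V θ t) φ :=
    Complex.ext (by simp) (by
      have := deriv_im_zero (fun t => V (sphL θ t)) φ
      simp only [VC, Complex.ofReal_im]; exact this.symm)
  refine ⟨(deriv (fun t => VC V t φ) θ).re, (deriv (fun t => VC V θ t) φ).re / Real.sin θ, ?_, ?_⟩
  · simp only [eth, neg_zero, zpow_zero, one_mul, mul_one, Complex.ofReal_div, Complex.ofReal_inv]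
    rw [ha, hb]; ring
  · simp only [ethbar, neg_zero, zpow_zero, one_mul, mul_one, Complex.ofReal_div, Complex.ofReal_inv]
    rw [ha, hb]; ring

/-- The real vectors `x ∈ ℝ⁴` with `η(x, ℓᵃ) = V` and `η(x, mᵃ) = ðV` form exactly the line
`{ V nᵃ − (ð̄V) mᵃ − (ðV) conj(mᵃ) + λ ℓᵃ : λ ∈ ℝ }`. -/
theorem stmt10 (θ φ : ℝ) (hθ : θ ∈ Set.Ioo 0 Real.pi)
    (V : (Fin 3 → ℝ) → ℝ)
    (hV : ContDiffOn ℝ (⊤ : ℕ∞) V {v : Fin 3 → ℝ | v ≠ 0})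
    (hhom : ∀ v : Fin 3 → ℝ, v ≠ 0 → ∀ t : ℝ, 0 < t → V (t • v) = V v) :
    {x : Fin 4 → ℝ | etaR x (tetL θ φ) = V (sphL θ φ) ∧
        etaC (fun i => (x i : ℂ)) (tetM θ φ) = eth 0 (VC V) θ φ} =
      {x : Fin 4 → ℝ | ∃ lam : ℝ, x = fun i =>
        ((V (sphL θ φ) : ℂ) * (tetN θ φ i : ℂ) - ethbar 0 (VC V) θ φ * tetM θ φ i -
          eth 0 (VC V) θ φ * (starRingEnd ℂ) (tetM θ φ i) +
          (lam : ℂ) * (tetL θ φ i : ℂ)).re} := by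
  obtain ⟨a, b, h1, h2⟩ := eth_form V θ φ
  rw [h1, h2]
  have hs : (Real.sqrt 2)⁻¹ ≠ 0 := by positivity
  have hs2 : (Real.sqrt 2)⁻¹ * (Real.sqrt 2)⁻¹ = 1 / 2 := by
    rw [← mul_inv, Real.mul_self_sqrt (by norm_num)]; norm_num
  generalize V (sphL θ φ) = W
  have hcs := Real.sin_sq_add_cos_sq θ
  have hCS := Real.sin_sq_add_cos_sq φ
  ext x
  simp only [Set.mem_ofPred_eq, etaR, etaC, tetL, tetM, tetN, sphL, sphM, funext_iff,
    Fin.forall_fin_succ, Complex.ext_iff, ← Complex.ofReal_inv]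
  simp [-Complex.ofReal_inv, -Complex.ofReal_cos, -Complex.ofReal_sin]
  generalize (Real.sqrt 2)⁻¹ = s at *
  generalize Real.sin θ = p at *
  generalize Real.cos θ = q at *
  generalize Real.sin φ = S at *
  generalize Real.cos φ = C at *
  generalize x 0 = x0
  generalize x 1 = x1
  generalize x 2 = x2
  generalize x 3 = x3
  constructor
  · rintro ⟨e1, e2, e3⟩
    have ea : a = -(x1 * (q * C)) - x2 * (q * S) + x3 * p :=
      mul_left_cancel₀ hs (by linear_combination -e2)
    have eb : b = x1 * S - x2 * C := mul_left_cancel₀ hs (by linear_combination -e3)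
    clear h1 h2
    subst ea eb e1
    refine ⟨x0 - (x0 - x1 * (p * C) - x2 * (p * S) - x3 * q) / 2, by ring, ?_, ?_, ?_⟩
    · linear_combination 2 * ((-(x1 * (q * C)) - x2 * (q * S) + x3 * p) * q * C
        - (x1 * S - x2 * C) * S) * hs2 - (x1 * C ^ 2 + x2 * S * C) * hcs - x1 * hCS
    · linear_combination 2 * ((-(x1 * (q * C)) - x2 * (q * S) + x3 * p) * q * S
        + (x1 * S - x2 * C) * C) * hs2 - (x1 * S * C + x2 * S ^ 2) * hcs - x2 * hCS
    · linear_combination -2 * (-(x1 * (q * C)) - x2 * (q * S) + x3 * p) * p * hs2 - x3 * hcs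
  · rintro ⟨l, e0, e1, e2, e3⟩
    have f1 : x1 = (l - W / 2) * p * C - (a * q * C - b * S) := by
      linear_combination e1 - 2 * (a * q * C - b * S) * hs2
    have f2 : x2 = (l - W / 2) * p * S - (a * q * S + b * C) := by
      linear_combination e2 - 2 * (a * q * S + b * C) * hs2
    have f3 : x3 = (l - W / 2) * q + a * p := by
      linear_combination e3 + 2 * a * p * hs2
    clear e1 e2 e3
    subst f1 f2 f3 e0
    refine ⟨?_, ?_, ?_⟩
    · linear_combination (-(l - W / 2) * p ^ 2 + a * p * q) * hCS - (l - W / 2) * hcs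
    · linear_combination s * ((-(l - W / 2) * p * q + a * q ^ 2) * hCS + a * hcs)
    · linear_combination s * b * hCS
end
end

section
/- (The cut function is minus the stutzfunction.) Let H : ℝ³∖{0} → ℝ be smooth and homogeneous of degree 0 with H(θ,φ) := H(ℓ(θ,φ)), and let x(θ,φ) := H ℓ + (ð̄H) m + (ðH) conj(m) ∈ ℝ³ be the surface with stutzfunction H. Then for every θ ∈ (0,π) and φ: lim_{r → ∞} (r − ‖x(θ,φ) + r·ℓ(θ,φ)‖) = −H(θ,φ). That is, the outgoing null geodesic from the point (0, x(θ,φ)) of the surface in its outward null normal direction (1, ℓ(θ,φ)) meets future null infinity at retarded time u = −H(θ,φ), so the cut of null infinity generated by the boundary of the future of the surface has cut function equal to minus the stutzfunction. -/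
noncomputable section

theorem lim_aux (h c : ℝ) (hc : h ^ 2 ≤ c) :
    Filter.Tendsto (fun r : ℝ => r - Real.sqrt (r ^ 2 + 2 * r * h + c))
      Filter.atTop (nhds (-h)) := by
  have h1 : Filter.Tendsto (fun r : ℝ => -h - (c - h ^ 2) / (r + h)) Filter.atTop (nhds (-h)) := by
    have h2 : Filter.Tendsto (fun r : ℝ => (c - h ^ 2) / (r + h)) Filter.atTop (nhds 0) :=
      Filter.Tendsto.const_div_atTop (Filter.tendsto_atTop_add_const_right _ _ Filter.tendsto_id) _
    simpa using h2.const_sub (-h)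
  refine tendsto_of_tendsto_of_tendsto_of_le_of_le' h1 tendsto_const_nhds ?_ ?_
  · filter_upwards [Filter.eventually_gt_atTop (-h)] with r hr
    have hp : 0 < r + h := by linarith
    have hd : 0 ≤ (c - h ^ 2) / (r + h) := div_nonneg (by linarith) hp.le
    have : Real.sqrt (r ^ 2 + 2 * r * h + c) ≤ r + h + (c - h ^ 2) / (r + h) := by
      rw [Real.sqrt_le_left (by linarith)]
      have e : (c - h ^ 2) / (r + h) * (r + h) = c - h ^ 2 := div_mul_cancel₀ _ hp.ne'
      nlinarith [sq_nonneg ((c - h ^ 2) / (r + h))]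
    linarith
  · filter_upwards with r
    have : r + h ≤ Real.sqrt (r ^ 2 + 2 * r * h + c) := Real.le_sqrt_of_sq_le (by nlinarith)
    linarith

theorem sphL_sq (θ φ : ℝ) :
    sphL θ φ 0 ^ 2 + sphL θ φ 1 ^ 2 + sphL θ φ 2 ^ 2 = 1 := by
  simp only [sphL, Matrix.cons_val]
  have h1 := Real.sin_sq_add_cos_sq θ
  have h2 := Real.sin_sq_add_cos_sq φ
  linear_combination h1 + Real.sin θ ^ 2 * h2

theorem sphL_sphM (θ φ : ℝ) :
    (sphL θ φ 0 : ℂ) * sphM θ φ 0 + sphL θ φ 1 * sphM θ φ 1 + sphL θ φ 2 * sphM θ φ 2 = 0 := by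
  simp only [sphL, sphM, Matrix.cons_val]
  have h2 : (Real.sin φ : ℂ) ^ 2 + (Real.cos φ : ℂ) ^ 2 = 1 := by
    exact_mod_cast Real.sin_sq_add_cos_sq φ
  simp only [Complex.ofReal_mul]
  linear_combination (Real.sqrt 2 : ℂ)⁻¹ * Real.sin θ * Real.cos θ * h2

theorem dot_surf (H : (Fin 3 → ℝ) → ℝ) (θ φ : ℝ) :
    surf H θ φ 0 * sphL θ φ 0 + surf H θ φ 1 * sphL θ φ 1 + surf H θ φ 2 * sphL θ φ 2
      = H (sphL θ φ) := by
  have hl := sphL_sq θ φ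
  have hm := sphL_sphM θ φ
  have hre := congrArg Complex.re hm
  have him := congrArg Complex.im hm
  simp only [Complex.add_re, Complex.add_im, Complex.re_ofReal_mul, Complex.im_ofReal_mul,
    Complex.zero_re, Complex.zero_im] at hre him
  simp only [surf, HC, Complex.add_re, Complex.mul_re, Complex.ofReal_re, Complex.ofReal_im,
    Complex.conj_re, Complex.conj_im]
  linear_combination H (sphL θ φ) * hl + ((ethbarH H θ φ).re + (ethH H θ φ).re) * hre
    + ((ethH H θ φ).im - (ethbarH H θ φ).im) * him

/-- The cut function is minus the stutzfunction: the outgoing null geodesic from the surface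
point `(0, x(θ,φ))` in the direction `(1, ℓ(θ,φ))` meets null infinity at retarded time
`lim_{r→∞} (r − ‖x(θ,φ) + r·ℓ(θ,φ)‖) = −H(θ,φ)`. -/
theorem stmt12 (H : (Fin 3 → ℝ) → ℝ)
    (hH : ContDiffOn ℝ (⊤ : ℕ∞) H {v : Fin 3 → ℝ | v ≠ 0})
    (hhom : ∀ v : Fin 3 → ℝ, v ≠ 0 → ∀ t : ℝ, 0 < t → H (t • v) = H v) :
    ∀ θ ∈ Set.Ioo 0 Real.pi, ∀ φ : ℝ,
      Filter.Tendsto (fun r : ℝ =>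
          r - norm3 (fun i => surf H θ φ i + r * sphL θ φ i))
        Filter.atTop (nhds (-(H (sphL θ φ)))) := by
  intro θ _ φ
  have hd := dot_surf H θ φ
  have hl := sphL_sq θ φ
  have key := lim_aux (H (sphL θ φ))
    (surf H θ φ 0 ^ 2 + surf H θ φ 1 ^ 2 + surf H θ φ 2 ^ 2) (by
      rw [← hd]
      generalize surf H θ φ = x at *
      generalize sphL θ φ = l at *
      have e : (x 0 ^ 2 + x 1 ^ 2 + x 2 ^ 2) * (l 0 ^ 2 + l 1 ^ 2 + l 2 ^ 2)
          = x 0 ^ 2 + x 1 ^ 2 + x 2 ^ 2 := by rw [hl, mul_one]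
      rw [← e]
      nlinarith [sq_nonneg (x 0 * l 1 - x 1 * l 0), sq_nonneg (x 0 * l 2 - x 2 * l 0),
        sq_nonneg (x 1 * l 2 - x 2 * l 1)])
  refine key.congr fun r => ?_
  unfold norm3
  congr 2
  linear_combination (-2 * r) * hd - r ^ 2 * hl
end
end
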